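/- arXiv:2601.21388 — 9 statements merged into one kernel-verified Lean document; each statement's English description precedes it below -/
import Mathlib

section
/- For every real number y, (1/6)·cos(2y) − (8/3)·cos(y) + 5/2 ≤ y². Equivalently, for every h > 0 and every real ξ, the fourth-order discrete Laplacian symbol satisfies ψ_h^{(4)}(ξ) ≤ ξ². -/
/-- Discrete symbol of the fourth-order (p = 4) central finite difference
approximation of `-d²/dx²`. -/
noncomputable def psi4 (h ξ : ℝ) : ℝ :=
  ((1/6) * Real.cos (2*ξ*h) - (8/3) * Real.cos (ξ*h) + 5/2) / h^2

theorem aux_deriv_nonneg (y : ℝ) (hy : 0 ≤ y) :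
    0 ≤ 2 * y + (1/3) * Real.sin (2*y) - (8/3) * Real.sin y := by
  have hd : ∀ x : ℝ, HasDerivAt
      (fun y : ℝ => 2 * y + (1/3) * Real.sin (2*y) - (8/3) * Real.sin y)
      ((4/3) * (1 - Real.cos x)^2) x := by
    intro x
    have h2 : HasDerivAt (fun y : ℝ => 2 * y) 2 x := by
      simpa using (hasDerivAt_id x).const_mul 2
    have h := (h2.add (h2.sin.const_mul (1/3))).sub ((Real.hasDerivAt_sin x).const_mul (8/3))
    refine h.congr_deriv ?_
    rw [Real.cos_two_mul]
    ring
  have hm := monotone_of_hasDerivAt_nonneg hd (fun x => by positivity)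
  have := hm hy
  simpa using this

theorem aux_main (y : ℝ) (hy : 0 ≤ y) :
    (1/6) * Real.cos (2*y) - (8/3) * Real.cos y + 5/2 ≤ y^2 := by
  have hd : ∀ x : ℝ, HasDerivAt
      (fun y : ℝ => y^2 - ((1/6) * Real.cos (2*y) - (8/3) * Real.cos y + 5/2))
      (2 * x + (1/3) * Real.sin (2*x) - (8/3) * Real.sin x) x := by
    intro x
    have h2 : HasDerivAt (fun y : ℝ => 2 * y) 2 x := by
      simpa using (hasDerivAt_id x).const_mul 2
    have h := (hasDerivAt_pow 2 x).sub (((h2.cos.const_mul (1/6)).sub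
      ((Real.hasDerivAt_cos x).const_mul (8/3))).add_const (5/2))
    refine h.congr_deriv ?_
    push_cast
    ring
  have hm := monotoneOn_of_deriv_nonneg (convex_Ici (0:ℝ))
    (fun x _ => (hd x).continuousAt.continuousWithinAt)
    (fun x _ => (hd x).differentiableAt.differentiableWithinAt)
    (fun x hx => by
      rw [(hd x).deriv]
      exact aux_deriv_nonneg x (interior_subset hx))
  have := hm (Set.mem_Ici.2 le_rfl) (Set.mem_Ici.2 hy) hy
  norm_num at this
  linarith

/-- For every real `y`, `(1/6)cos(2y) − (8/3)cos(y) + 5/2 ≤ y²`; equivalently,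
for every `h > 0` and real `ξ`, the fourth-order discrete Laplacian symbol
satisfies `ψ_h^{(4)}(ξ) ≤ ξ²`. -/
theorem fourth_order_symbol_upper_bound :
    (∀ y : ℝ, (1/6) * Real.cos (2*y) - (8/3) * Real.cos y + 5/2 ≤ y^2) ∧
    (∀ h : ℝ, 0 < h → ∀ ξ : ℝ, psi4 h ξ ≤ ξ^2) := by
  have key : ∀ y : ℝ, (1/6) * Real.cos (2*y) - (8/3) * Real.cos y + 5/2 ≤ y^2 := by
    intro y
    rcases le_total 0 y with hy | hy
    · exact aux_main y hy
    · have := aux_main (-y) (by linarith)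
      simpa [mul_neg, Real.cos_neg] using this
  refine ⟨key, ?_⟩
  intro h hh ξ
  unfold psi4
  rw [div_le_iff₀ (by positivity)]
  have := key (ξ * h)
  rw [← mul_assoc, mul_pow] at this
  exact this
end

section
/- For every real number y, (1/280)·cos(4y) − (16/315)·cos(3y) + (2/5)·cos(2y) − (16/5)·cos(y) + 205/72 ≤ y². Equivalently, for every h > 0 and every real ξ, the eighth-order discrete Laplacian symbol satisfies ψ_h^{(8)}(ξ) ≤ ξ². -/
/-- Discrete symbol of the eighth-order (p = 8) central finite difference
approximation of `-d²/dx²`. -/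
noncomputable def psi8 (h ξ : ℝ) : ℝ :=
  ((1/280) * Real.cos (4*ξ*h) - (16/315) * Real.cos (3*ξ*h) + (2/5) * Real.cos (2*ξ*h)
    - (16/5) * Real.cos (ξ*h) + 205/72) / h^2

theorem aux_d (k y : ℝ) : HasDerivAt (fun y : ℝ => Real.cos (k*y)) (-(k * Real.sin (k*y))) y := by
  have h := ((hasDerivAt_id y).const_mul k).cos
  simp only [id, mul_one] at h
  convert h using 1
  ring

theorem aux_s (k y : ℝ) : HasDerivAt (fun y : ℝ => Real.sin (k*y)) (k * Real.cos (k*y)) y := by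
  have h := ((hasDerivAt_id y).const_mul k).sin
  simp only [id, mul_one] at h
  convert h using 1
  ring

theorem aux_f1 : Monotone (fun y : ℝ => 2*y - (-(1/70) * Real.sin (4*y) + (16/105) * Real.sin (3*y)
    - (4/5) * Real.sin (2*y) + (16/5) * Real.sin (1*y))) := by
  have hd : ∀ y : ℝ, HasDerivAt (fun y : ℝ => 2*y - (-(1/70) * Real.sin (4*y)
      + (16/105) * Real.sin (3*y) - (4/5) * Real.sin (2*y) + (16/5) * Real.sin (1*y)))
      ((16/35) * (1 - Real.cos y)^4) y := by
    intro y
    have h := ((hasDerivAt_id y).const_mul 2).sub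
      (((((aux_s 4 y).const_mul (-(1/70))).add ((aux_s 3 y).const_mul (16/105))).sub
        ((aux_s 2 y).const_mul (4/5))).add ((aux_s 1 y).const_mul (16/5)))
    refine HasDerivAt.congr_deriv h ?_
    have h4 : Real.cos (4*y) = 2 * (2 * Real.cos y^2 - 1)^2 - 1 := by
      rw [← Real.cos_two_mul, ← Real.cos_two_mul]; ring_nf
    rw [h4, Real.cos_three_mul, Real.cos_two_mul, one_mul]
    ring
  refine monotone_of_deriv_nonneg (fun y => (hd y).differentiableAt) (fun y => ?_)
  rw [(hd y).deriv]
  positivity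

theorem aux_nonneg (y : ℝ) (hy : 0 ≤ y) : (1/280) * Real.cos (4*y) - (16/315) * Real.cos (3*y)
    + (2/5) * Real.cos (2*y) - (16/5) * Real.cos (1*y) + 205/72 ≤ y^2 := by
  have hd : ∀ y : ℝ, HasDerivAt (fun y : ℝ => y^2 - ((1/280) * Real.cos (4*y)
      - (16/315) * Real.cos (3*y) + (2/5) * Real.cos (2*y) - (16/5) * Real.cos (1*y)))
      (2*y - (-(1/70) * Real.sin (4*y) + (16/105) * Real.sin (3*y)
    - (4/5) * Real.sin (2*y) + (16/5) * Real.sin (1*y))) y := by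
    intro y
    have h := (hasDerivAt_pow 2 y).sub
      (((((aux_d 4 y).const_mul (1/280)).sub ((aux_d 3 y).const_mul (16/315))).add
        ((aux_d 2 y).const_mul (2/5))).sub ((aux_d 1 y).const_mul (16/5)))
    refine HasDerivAt.congr_deriv h ?_
    push_cast
    ring
  have hm := monotoneOn_of_deriv_nonneg (convex_Ici (0:ℝ))
    (fun y _ => (hd y).continuousAt.continuousWithinAt)
    (fun y _ => (hd y).differentiableAt.differentiableWithinAt)
    (fun y hy => by
      rw [(hd y).deriv]
      rw [interior_Ici] at hy
      have := aux_f1 (le_of_lt hy)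
      simpa using this)
  have := hm (Set.mem_Ici.2 le_rfl) (Set.mem_Ici.2 hy) hy
  simp only [mul_zero, Real.cos_zero] at this
  linarith

theorem aux_all (y : ℝ) : (1/280) * Real.cos (4*y) - (16/315) * Real.cos (3*y)
    + (2/5) * Real.cos (2*y) - (16/5) * Real.cos y + 205/72 ≤ y^2 := by
  rcases le_total 0 y with h | h
  · simpa only [one_mul] using aux_nonneg y h
  · simpa only [one_mul, mul_neg, Real.cos_neg, neg_sq] using aux_nonneg (-y) (by linarith)

/-- For every real `y`,
`(1/280)cos(4y) − (16/315)cos(3y) + (2/5)cos(2y) − (16/5)cos(y) + 205/72 ≤ y²`;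
equivalently, for every `h > 0` and real `ξ`, the eighth-order discrete Laplacian
symbol satisfies `ψ_h^{(8)}(ξ) ≤ ξ²`. -/
theorem eighth_order_symbol_upper_bound :
    (∀ y : ℝ, (1/280) * Real.cos (4*y) - (16/315) * Real.cos (3*y) + (2/5) * Real.cos (2*y)
      - (16/5) * Real.cos y + 205/72 ≤ y^2) ∧
    (∀ h : ℝ, 0 < h → ∀ ξ : ℝ, psi8 h ξ ≤ ξ^2) := by
  refine ⟨aux_all, fun h hh ξ => ?_⟩
  unfold psi8
  rw [div_le_iff₀ (by positivity)]
  have := aux_all (ξ*h)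
  simp only [← mul_assoc] at this
  rw [mul_pow] at this
  exact this
end

section
/- There exists a constant c > 0 such that for every real number y with |y| ≤ π, c·y² ≤ −(1/45)·cos(3y) + (3/10)·cos(2y) − 3·cos(y) + 49/18. -/
/-- There is a constant `c > 0` with
`c·y² ≤ −(1/45)cos(3y) + (3/10)cos(2y) − 3cos(y) + 49/18` for all `|y| ≤ π`. -/
theorem sixth_order_symbol_lower_bound :
    ∃ c : ℝ, 0 < c ∧ ∀ y : ℝ, |y| ≤ Real.pi →
      c * y^2 ≤ -(1/45) * Real.cos (3*y) + (3/10) * Real.cos (2*y) - 3 * Real.cos y + 49/18 := by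
  refine ⟨4 / Real.pi ^ 2, by positivity, fun y hy => ?_⟩
  have h := Real.cos_le_one_sub_mul_cos_sq hy
  have h1 : 0 ≤ 1 - Real.cos y := by linarith [Real.cos_le_one y]
  rw [Real.cos_three_mul, Real.cos_two_mul]
  have h2 : 4 / Real.pi ^ 2 * y ^ 2 = 2 * (2 / Real.pi ^ 2 * y ^ 2) := by ring
  have h3 : 0 ≤ (1 - Real.cos y) ^ 2 / 3 + 4 / 45 * (1 - Real.cos y) ^ 3 := by positivity
  rw [h2]
  nlinarith [h, h3]
end

section
/- There exists a constant c > 0 such that for every real number y with |y| ≤ π, c·y² ≤ (1/280)·cos(4y) − (16/315)·cos(3y) + (2/5)·cos(2y) − (16/5)·cos(y) + 205/72. -/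
/-- There is a constant `c > 0` with
`c·y² ≤ (1/280)cos(4y) − (16/315)cos(3y) + (2/5)cos(2y) − (16/5)cos(y) + 205/72`
for all `|y| ≤ π`. -/
theorem eighth_order_symbol_lower_bound :
    ∃ c : ℝ, 0 < c ∧ ∀ y : ℝ, |y| ≤ Real.pi →
      c * y^2 ≤ (1/280) * Real.cos (4*y) - (16/315) * Real.cos (3*y) + (2/5) * Real.cos (2*y)
        - (16/5) * Real.cos y + 205/72 := by
  refine ⟨2 * (2 / Real.pi ^ 2), by positivity, fun y hy => ?_⟩
  have h1 := Real.cos_le_one_sub_mul_cos_sq hy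
  have h4 : Real.cos (4*y) = 2 * (2 * Real.cos y ^ 2 - 1) ^ 2 - 1 := by
    rw [show 4 * y = 2 * (2 * y) by ring, Real.cos_two_mul, Real.cos_two_mul]
  rw [h4, Real.cos_three_mul, Real.cos_two_mul]
  have hu : 0 ≤ 1 - Real.cos y := by linarith [Real.cos_le_one y]
  have h2 : 0 ≤ (1 - Real.cos y) ^ 2 / 3 + 4 * (1 - Real.cos y) ^ 3 / 45
      + (1 - Real.cos y) ^ 4 / 35 := by positivity
  linarith
end

section
/- There exists a constant C > 0 such that for every h > 0 and every real ξ with 0 ≤ ξ ≤ π/h, one has |√(ψ_h^{(4)}(ξ)) − ξ| ≤ C·ξ⁵·h⁴. -/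
lemma aux_nonneg_s7 (f f' : ℝ → ℝ) (hf : ∀ x, HasDerivAt f (f' x) x) (h0 : f 0 = 0)
    (hp : ∀ x, 0 ≤ x → 0 ≤ f' x) (x : ℝ) (hx : 0 ≤ x) : 0 ≤ f x := by
  have hm : MonotoneOn f (Set.Ici 0) := by
    apply monotoneOn_of_deriv_nonneg (convex_Ici 0)
    · exact fun y _ => (hf y).continuousAt.continuousWithinAt
    · exact fun y _ => (hf y).differentiableAt.differentiableWithinAt
    · intro y hy
      rw [interior_Ici] at hy
      rw [(hf y).deriv]
      exact hp y (le_of_lt hy)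
  have := hm (Set.mem_Ici.2 le_rfl) (Set.mem_Ici.2 hx) hx
  rwa [h0] at this

lemma aux_pow (n : ℕ) (c x : ℝ) :
    HasDerivAt (fun y : ℝ => y ^ (n+1) / c) ((n+1) * x ^ n / c) x := by
  simpa using (hasDerivAt_pow (n+1) x).div_const c

lemma aux_sin3 (x : ℝ) (hx : 0 ≤ x) : 0 ≤ Real.sin x - x + x^3/6 := by
  refine aux_nonneg_s7 (fun x => Real.sin x - x + x^3/6) (fun x => Real.cos x - 1 + x^2/2)
    (fun x => ?_) (by simp) (fun x _ => ?_) x hx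
  · refine HasDerivAt.congr_deriv (((Real.hasDerivAt_sin x).sub (hasDerivAt_id x)).add (aux_pow 2 6 x)) ?_
    push_cast; ring
  · have := Real.one_sub_sq_div_two_le_cos (x := x)
    linarith

lemma aux_cos4 (x : ℝ) (hx : 0 ≤ x) : 0 ≤ 1 - x^2/2 + x^4/24 - Real.cos x := by
  refine aux_nonneg_s7 (fun x => 1 - x^2/2 + x^4/24 - Real.cos x) (fun x => Real.sin x - x + x^3/6)
    (fun x => ?_) (by simp) (fun x h => aux_sin3 x h) x hx
  refine HasDerivAt.congr_deriv ((((hasDerivAt_const x (1:ℝ)).sub (aux_pow 1 2 x)).add (aux_pow 3 24 x)).sub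
    (Real.hasDerivAt_cos x)) ?_
  push_cast; ring

lemma aux_sin5 (x : ℝ) (hx : 0 ≤ x) : 0 ≤ x - x^3/6 + x^5/120 - Real.sin x := by
  refine aux_nonneg_s7 (fun x => x - x^3/6 + x^5/120 - Real.sin x)
    (fun x => 1 - x^2/2 + x^4/24 - Real.cos x)
    (fun x => ?_) (by simp) (fun x h => aux_cos4 x h) x hx
  refine HasDerivAt.congr_deriv ((((hasDerivAt_id x).sub (aux_pow 2 6 x)).add (aux_pow 4 120 x)).sub
    (Real.hasDerivAt_sin x)) ?_
  push_cast; ring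

lemma aux_cos6 (x : ℝ) (hx : 0 ≤ x) : 0 ≤ Real.cos x - 1 + x^2/2 - x^4/24 + x^6/720 := by
  refine aux_nonneg_s7 (fun x => Real.cos x - 1 + x^2/2 - x^4/24 + x^6/720)
    (fun x => x - x^3/6 + x^5/120 - Real.sin x)
    (fun x => ?_) (by simp) (fun x h => aux_sin5 x h) x hx
  refine HasDerivAt.congr_deriv (((((Real.hasDerivAt_cos x).sub (hasDerivAt_const x (1:ℝ))).add (aux_pow 1 2 x)).sub
    (aux_pow 3 24 x)).add (aux_pow 5 720 x)) ?_
  push_cast; ring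

/-- There exists `C > 0` such that for every `h > 0` and every `0 ≤ ξ ≤ π/h`,
`|√(ψ_h^{(4)}(ξ)) − ξ| ≤ C·ξ⁵·h⁴`. -/
theorem fourth_order_discrete_frequency_consistency :
    ∃ C : ℝ, 0 < C ∧ ∀ h : ℝ, 0 < h → ∀ ξ : ℝ, 0 ≤ ξ → ξ ≤ Real.pi / h →
      |Real.sqrt (psi4 h ξ) - ξ| ≤ C * ξ^5 * h^4 := by
  refine ⟨1, one_pos, fun h hh ξ hξ _ => ?_⟩
  rcases hξ.eq_or_lt with rfl | hpos
  · norm_num [psi4]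
  have hx : 0 ≤ ξ * h := by positivity
  have hx2 : 0 ≤ 2 * ξ * h := by positivity
  have hnn : 0 ≤ psi4 h ξ := by
    unfold psi4
    apply div_nonneg _ (by positivity)
    rw [mul_assoc, Real.cos_two_mul]
    nlinarith [Real.cos_le_one (ξ * h)]
  have a1 := aux_cos4 _ hx
  have a2 := aux_cos6 _ hx
  have b1 := aux_cos4 _ hx2
  have b2 := aux_cos6 _ hx2
  have key : |psi4 h ξ - ξ^2| ≤ ξ^6 * h^4 := by
    have e : psi4 h ξ - ξ^2 = ((1/6) * Real.cos (2*ξ*h) - (8/3) * Real.cos (ξ*h) + 5/2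
        - (ξ*h)^2) / h^2 := by
      unfold psi4; field_simp
    have e2 : ξ^6 * h^4 = (ξ*h)^6 / h^2 := by field_simp
    have p6 : 0 ≤ (ξ*h)^6 := by positivity
    rw [e, e2, abs_div, abs_of_pos (by positivity : 0 < h^2)]
    apply div_le_div_of_nonneg_right _ (by positivity)
    rw [mul_assoc] at b1 b2 ⊢
    generalize ξ * h = x at *
    rw [abs_le]
    constructor <;> nlinarith
  have hs := Real.sqrt_nonneg (psi4 h ξ)
  have hsq := Real.sq_sqrt hnn
  have e3 : psi4 h ξ - ξ^2 = (Real.sqrt (psi4 h ξ) - ξ) * (Real.sqrt (psi4 h ξ) + ξ) := by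
    nlinarith
  rw [e3, abs_mul, abs_of_nonneg (by positivity : 0 ≤ Real.sqrt (psi4 h ξ) + ξ)] at key
  have h4 : |Real.sqrt (psi4 h ξ) - ξ| * ξ ≤ (1 * ξ^5 * h^4) * ξ := by
    have := mul_nonneg (abs_nonneg (Real.sqrt (psi4 h ξ) - ξ)) hs
    nlinarith
  exact le_of_mul_le_mul_right h4 hpos
end

section
/- Let α ∈ (0,1) and let z be a complex number with Re z ≥ 0. Then, with z^α the principal branch of the complex power (and 0^α = 0), z^α = (α/Γ(1−α)) · ∫₀^∞ (1 − e^{−zy}) · y^{−α−1} dy, the integral being absolutely convergent. -/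
open Complex MeasureTheory

noncomputable def auxf (α : ℝ) (z : ℂ) (y : ℝ) : ℂ :=
  (1 - Complex.exp (-(z * (y : ℂ)))) * ((y ^ (-α - 1) : ℝ) : ℂ)

lemma auxf_norm (α : ℝ) (z : ℂ) (hz : 0 ≤ z.re) (y : ℝ) (hy : 0 < y) :
    ‖auxf α z y‖ ≤ 2 * (1 + ‖z‖) * (min 1 y * y ^ (-α - 1)) := by
  have hp : 0 < y ^ (-α - 1) := Real.rpow_pos_of_pos hy _
  have h2 : ‖1 - Complex.exp (-(z * (y : ℂ)))‖ ≤ 2 := by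
    refine (norm_sub_le _ _).trans ?_
    rw [Complex.norm_exp, norm_one]
    have : Real.exp (-(z * (y : ℂ))).re ≤ 1 := by
      apply Real.exp_le_one_iff.2
      simp
      positivity
    linarith
  have h3 : ‖1 - Complex.exp (-(z * (y : ℂ)))‖ ≤ 2 * (‖z‖ * y) := by
    have hn : ‖-(z * (y : ℂ))‖ = ‖z‖ * y := by simp [abs_of_pos hy]
    by_cases h : ‖z‖ * y ≤ 1
    · rw [norm_sub_rev]
      have := Complex.norm_exp_sub_one_le (x := -(z * (y : ℂ))) (by rw [hn]; exact h)
      rwa [hn] at this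
    · push Not at h
      linarith
  have h4 : ‖1 - Complex.exp (-(z * (y : ℂ)))‖ ≤ 2 * (1 + ‖z‖) * min 1 y := by
    have := norm_nonneg z
    rcases le_total 1 y with h | h
    · rw [min_eq_left h]; linarith
    · rw [min_eq_right h]; nlinarith
  unfold auxf
  rw [norm_mul, Complex.norm_real, Real.norm_of_nonneg hp.le, ← mul_assoc]
  gcongr

lemma auxg_int (α : ℝ) (hα : α ∈ Set.Ioo (0:ℝ) 1) :
    IntegrableOn (fun y : ℝ => min 1 y * y ^ (-α - 1)) (Set.Ioi 0) := by
  obtain ⟨h0, h1⟩ := hα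
  rw [← Set.Ioc_union_Ioi_eq_Ioi (zero_le_one' ℝ)]
  refine IntegrableOn.union ?_ ?_
  · have : IntegrableOn (fun y : ℝ => y ^ (-α)) (Set.Ioc 0 1) :=
      (intervalIntegrable_iff_integrableOn_Ioc_of_le zero_le_one).1
        (intervalIntegral.intervalIntegrable_rpow' (by linarith))
    refine this.congr_fun (fun y hy => ?_) measurableSet_Ioc
    simp only
    rw [min_eq_right hy.2, ← Real.rpow_one_add' hy.1.le (by linarith)]
    congr 1; ring
  · refine (integrableOn_Ioi_rpow_of_lt (a := -α - 1) (by linarith) one_pos).congr_fun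
      (fun y hy => ?_) measurableSet_Ioi
    simp only
    rw [min_eq_left (le_of_lt hy), one_mul]

lemma auxf_meas (α : ℝ) (z : ℂ) : Measurable (auxf α z) := by
  unfold auxf
  fun_prop

lemma auxf_int (α : ℝ) (hα : α ∈ Set.Ioo (0:ℝ) 1) (z : ℂ) (hz : 0 ≤ z.re) :
    IntegrableOn (auxf α z) (Set.Ioi 0) := by
  refine Integrable.mono' ((auxg_int α hα).const_mul (2 * (1 + ‖z‖)))
    (auxf_meas α z).aestronglyMeasurable ?_
  filter_upwards [ae_restrict_mem measurableSet_Ioi] with y hy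
  exact auxf_norm α z hz y hy

noncomputable def auxF (α : ℝ) (z : ℂ) : ℂ := ∫ y in Set.Ioi (0:ℝ), auxf α z y

lemma auxF_cont (α : ℝ) (hα : α ∈ Set.Ioo (0:ℝ) 1) (z : ℂ) (hz : 0 ≤ z.re) :
    ContinuousWithinAt (auxF α) {w | 0 ≤ w.re} z := by
  unfold auxF
  refine continuousWithinAt_of_dominated
    (bound := fun y => 2 * (1 + (‖z‖ + 1)) * (min 1 y * y ^ (-α - 1))) ?_ ?_ ?_ ?_
  · exact Filter.Eventually.of_forall fun w => (auxf_meas α w).aestronglyMeasurable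
  · have : ∀ᶠ w in nhdsWithin z {w : ℂ | 0 ≤ w.re}, ‖w‖ < ‖z‖ + 1 :=
      (continuous_norm.continuousWithinAt (s := {w : ℂ | 0 ≤ w.re}) (x := z)).eventually_lt_const
        (by linarith)
    filter_upwards [this, self_mem_nhdsWithin] with w hw hw0
    filter_upwards [ae_restrict_mem measurableSet_Ioi] with y hy
    refine (auxf_norm α w hw0 y hy).trans ?_
    have hy' : (0:ℝ) < y := hy
    gcongr
  · exact (auxg_int α hα).const_mul _
  · refine Filter.Eventually.of_forall fun y => ?_
    unfold auxf
    fun_prop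

lemma auxF_deriv (α : ℝ) (hα : α ∈ Set.Ioo (0:ℝ) 1) (z : ℂ) (hz : 0 < z.re) :
    HasDerivAt (auxF α)
      (∫ y in Set.Ioi (0:ℝ), Complex.exp (-(z * (y : ℂ))) * ((y ^ (-α) : ℝ) : ℂ)) z := by
  unfold auxF
  refine (hasDerivAt_integral_of_dominated_loc_of_deriv_le (F := auxf α)
    (F' := fun z (y:ℝ) => Complex.exp (-(z * (y : ℂ))) * ((y ^ (-α) : ℝ) : ℂ))
    (bound := fun y => y ^ (-α) * Real.exp (-(z.re / 2) * y ^ (1:ℝ)))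
    (s := {w | z.re / 2 < w.re}) ?_ ?_ ?_ ?_ ?_ ?_ ?_).2
  · exact (isOpen_lt continuous_const Complex.continuous_re).mem_nhds (by simp; linarith)
  · exact Filter.Eventually.of_forall fun w => (auxf_meas α w).aestronglyMeasurable
  · exact auxf_int α hα z hz.le
  · apply Measurable.aestronglyMeasurable
    fun_prop
  · filter_upwards [ae_restrict_mem measurableSet_Ioi] with y hy w hw
    have hy' : (0:ℝ) < y := hy
    have hw' : z.re / 2 < w.re := hw
    have hp : 0 < y ^ (-α) := Real.rpow_pos_of_pos hy' _
    rw [norm_mul, Complex.norm_real, Real.norm_of_nonneg hp.le, mul_comm, Complex.norm_exp,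
      Real.rpow_one]
    gcongr
    simp
    gcongr
  · exact integrableOn_rpow_mul_exp_neg_mul_rpow (by linarith [hα.2]) one_pos (by linarith)
  · filter_upwards [ae_restrict_mem measurableSet_Ioi] with y hy w hw
    have hy' : (0:ℝ) < y := hy
    have h1 : HasDerivAt (fun w : ℂ => -(w * (y:ℂ))) (-(1 * (y:ℂ))) w :=
      ((hasDerivAt_id w).mul_const _).neg
    have h2 := (h1.cexp.const_sub 1).mul_const ((y ^ (-α - 1) : ℝ) : ℂ)
    unfold auxf
    refine h2.congr_deriv ?_
    have : y ^ (-α) = y * y ^ (-α - 1) := by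
      rw [← Real.rpow_one_add' hy'.le (by linarith [hα.1])]
      congr 1; ring
    rw [this]; push_cast; ring

lemma auxF_scale (α : ℝ) (z : ℂ) (r : ℝ) (hr : 0 < r) (hα : α ∈ Set.Ioo (0:ℝ) 1) :
    auxF α (r * z) = ((r ^ α : ℝ) : ℂ) * auxF α z := by
  have h := integral_comp_mul_left_Ioi' (auxf α z) 0 hr
  rw [mul_zero] at h
  unfold auxF
  rw [← h, ← integral_smul, ← integral_const_mul]
  refine setIntegral_congr_fun measurableSet_Ioi fun y hy => ?_
  have hy' : (0:ℝ) < y := hy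
  simp only [auxf]
  have : (r ^ α) * (r * (r * y) ^ (-α - 1)) = y ^ (-α - 1) := by
    rw [Real.mul_rpow hr.le hy'.le, ← mul_assoc, ← mul_assoc, mul_assoc (r ^ α),
      ← Real.rpow_one_add' hr.le (by linarith [hα.1]), ← Real.rpow_add hr]
    ring_nf
    simp
  rw [← this]
  simp only [real_smul]
  push_cast
  ring_nf

lemma auxF_euler (α : ℝ) (hα : α ∈ Set.Ioo (0:ℝ) 1) (z D : ℂ) (hz : 0 < z.re)
    (hD : HasDerivAt (auxF α) D z) : D * z = α * auxF α z := by
  have h1 : HasDerivAt (fun r : ℝ => auxF α (r * z)) (D * (1 * z)) 1 := by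
    have hm : HasDerivAt (fun r : ℝ => (r : ℂ) * z) (1 * z) 1 :=
      (Complex.ofRealCLM.hasDerivAt (x := (1:ℝ))).mul_const z
    refine HasDerivAt.comp (𝕜' := ℂ) (1:ℝ) (h₂ := auxF α) ?_ hm
    simpa using hD
  have h2 : HasDerivAt (fun r : ℝ => ((r ^ α : ℝ) : ℂ) * auxF α z) (α * auxF α z) 1 := by
    have := (Real.hasDerivAt_rpow_const (x := 1) (p := α) (Or.inl one_ne_zero)).ofReal_comp.mul_const
      (auxF α z)
    simpa using this
  have h3 := h2.congr_of_eventuallyEq (f₁ := fun r : ℝ => auxF α (r * z)) (by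
    filter_upwards [lt_mem_nhds (zero_lt_one' ℝ)] with r hr
    exact auxF_scale α z r hr hα)
  simpa using h1.unique h3

lemma auxF_one (α : ℝ) (hα : α ∈ Set.Ioo (0:ℝ) 1) :
    (Real.Gamma (1 - α) : ℂ) = α * auxF α 1 := by
  rw [← auxF_euler α hα 1 _ (by simp) (auxF_deriv α hα 1 (by simp)), mul_one,
    Real.Gamma_eq_integral (by linarith [hα.2]), ← integral_complex_ofReal]
  refine setIntegral_congr_fun measurableSet_Ioi fun y hy => ?_
  simp

lemma auxF_open (α : ℝ) (hα : α ∈ Set.Ioo (0:ℝ) 1) (z : ℂ) (hz : 0 < z.re) :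
    auxF α z = z ^ (α : ℂ) * auxF α 1 := by
  have hd : ∀ w : ℂ, 0 < w.re → HasDerivAt (fun w => auxF α w * w ^ (-(α : ℂ))) 0 w := by
    intro w hw
    have hw0 : w ≠ 0 := by rintro rfl; simp at hw
    have h1 := auxF_deriv α hα w hw
    have he := auxF_euler α hα w _ hw h1
    have h2 : HasDerivAt (fun w : ℂ => w ^ (-(α : ℂ))) (-(α : ℂ) * w ^ (-(α : ℂ) - 1) * 1) w :=
      (hasDerivAt_id w).cpow_const (Or.inl hw)
    refine (h1.mul h2).congr_deriv ?_
    rw [cpow_sub _ _ hw0, cpow_one]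
    field_simp
    linear_combination (w ^ (-(α : ℂ))) * he
  have ho : IsOpen {w : ℂ | 0 < w.re} := isOpen_lt continuous_const Complex.continuous_re
  have := ho.is_const_of_deriv_eq_zero (convex_halfSpace_re_gt 0).isPreconnected
    (fun w hw => (hd w hw).differentiableAt.differentiableWithinAt)
    (fun w hw => (hd w hw).deriv) (x := z) (y := 1) hz (by simp)
  have hz0 : z ≠ 0 := by rintro rfl; simp at hz
  have hzp : z ^ (α : ℂ) ≠ 0 := by simp [cpow_eq_zero_iff, hz0]
  simp only [one_cpow, inv_one, mul_one, cpow_neg] at this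
  rw [← this]
  field_simp

lemma auxF_closed (α : ℝ) (hα : α ∈ Set.Ioo (0:ℝ) 1) (z : ℂ) (hz : 0 ≤ z.re) :
    auxF α z = z ^ (α : ℂ) * auxF α 1 := by
  by_cases hz0 : z = 0
  · subst hz0
    have : (α : ℂ) ≠ 0 := by exact_mod_cast hα.1.ne'
    simp [auxF, auxf, zero_cpow this]
  have hs : z ∈ slitPlane := by
    rw [mem_slitPlane_iff]
    rcases hz.lt_or_eq with h | h
    · exact Or.inl h
    · right; intro h'; exact hz0 (Complex.ext h.symm h')
  have ht : Filter.Tendsto (fun e : ℝ => z + (e : ℂ)) (nhdsWithin 0 (Set.Ioi 0)) (nhds z) := by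
    have : Continuous (fun e : ℝ => z + (e : ℂ)) := by fun_prop
    simpa using (this.tendsto 0).mono_left nhdsWithin_le_nhds
  have ht' : Filter.Tendsto (fun e : ℝ => z + (e : ℂ)) (nhdsWithin 0 (Set.Ioi 0))
      (nhdsWithin z {w | 0 ≤ w.re}) := by
    refine tendsto_nhdsWithin_iff.2 ⟨ht, ?_⟩
    filter_upwards [self_mem_nhdsWithin] with e he
    have : (0:ℝ) < e := he
    simp; linarith
  have h1 := (auxF_cont α hα z hz).tendsto.comp ht'
  have h2 : Filter.Tendsto (fun e : ℝ => (z + (e : ℂ)) ^ (α : ℂ) * auxF α 1)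
      (nhdsWithin 0 (Set.Ioi 0)) (nhds (z ^ (α : ℂ) * auxF α 1)) :=
    ((continuousAt_cpow_const (b := (α : ℂ)) hs).tendsto.comp ht).mul_const _
  refine tendsto_nhds_unique h1 (h2.congr' ?_)
  filter_upwards [self_mem_nhdsWithin] with e he
  have : (0:ℝ) < e := he
  exact (auxF_open α hα _ (by simp; linarith)).symm



/-- For `α ∈ (0,1)` and `z ∈ ℂ` with `Re z ≥ 0`, with `z^α` the principal branch
of the complex power, `z^α = (α/Γ(1−α))·∫₀^∞ (1 − e^{−zy})·y^{−α−1} dy`, the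
integral being absolutely convergent. -/
theorem cpow_integral_representation_alpha_lt_one (α : ℝ) (hα : α ∈ Set.Ioo (0:ℝ) 1)
    (z : ℂ) (hz : 0 ≤ z.re) :
    IntegrableOn (fun y : ℝ =>
        (1 - Complex.exp (-(z * (y : ℂ)))) * ((y ^ (-α - 1) : ℝ) : ℂ)) (Set.Ioi 0) ∧
    z ^ (α : ℂ) = ((α / Real.Gamma (1 - α) : ℝ) : ℂ) *
      ∫ y in Set.Ioi (0:ℝ), (1 - Complex.exp (-(z * (y : ℂ)))) * ((y ^ (-α - 1) : ℝ) : ℂ) := by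
  refine ⟨auxf_int α hα z hz, ?_⟩
  change _ = _ * auxF α z
  have hG : (Real.Gamma (1 - α) : ℂ) ≠ 0 := by
    exact_mod_cast (Real.Gamma_pos_of_pos (by linarith [hα.2])).ne'
  rw [auxF_closed α hα z hz]
  push_cast
  field_simp
  rw [auxF_one α hα]
  ring
end

section
/- Let α ∈ (1,2) and let z be a complex number with Re z ≥ 0. Then, with z^α the principal branch of the complex power (and 0^α = 0), z^α = (α(α−1)/Γ(2−α)) · ∫₀^∞ (e^{−zy} − 1 + zy) · y^{−α−1} dy, the integral being absolutely convergent. -/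
open Complex MeasureTheory

namespace CpowAux

lemma exp_le_one {w : ℂ} (hw : 0 ≤ w.re) : ‖Complex.exp (-w)‖ ≤ 1 := by
  rw [Complex.norm_exp]; simpa using hw

lemma bound1 {w : ℂ} (hw : 0 ≤ w.re) : ‖1 - Complex.exp (-w)‖ ≤ 2 * min 1 ‖w‖ := by
  have h1 : ‖1 - Complex.exp (-w)‖ ≤ 2 := by
    refine (norm_sub_le _ _).trans ?_
    have := exp_le_one hw
    simp only [norm_one]; linarith
  rcases le_total ‖w‖ 1 with h | h
  · rw [min_eq_right h, norm_sub_rev]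
    simpa using Complex.norm_exp_sub_one_le (x := -w) (by simpa using h)
  · rw [min_eq_left h]; linarith

lemma bound2 {w : ℂ} (hw : 0 ≤ w.re) :
    ‖Complex.exp (-w) - 1 + w‖ ≤ 3 * min ‖w‖ (‖w‖ ^ 2) := by
  have h0 := norm_nonneg w
  rcases le_total ‖w‖ 1 with h | h
  · have := Complex.norm_exp_sub_one_sub_id_le (x := -w) (by simpa using h)
    rw [sub_neg_eq_add, norm_neg] at this
    rw [min_eq_right (by nlinarith)]
    nlinarith
  · rw [min_eq_left (by nlinarith)]
    have h1 : ‖Complex.exp (-w) - 1 + w‖ ≤ ‖Complex.exp (-w)‖ + 1 + ‖w‖ := by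
      refine (norm_add_le _ _).trans ?_
      gcongr
      refine (norm_sub_le _ _).trans ?_
      simp
    have := exp_le_one hw
    linarith

/-- dominating function -/
noncomputable def g (α y : ℝ) : ℝ := min y (y ^ 2) * y ^ (-α - 1)

lemma g_int {α : ℝ} (hα : α ∈ Set.Ioo (1:ℝ) 2) : IntegrableOn (g α) (Set.Ioi 0) := by
  rw [← Set.Ioc_union_Ioi_eq_Ioi (zero_le_one' ℝ)]
  refine IntegrableOn.union ?_ ?_
  · have h := (intervalIntegral.intervalIntegrable_rpow' (a := 0) (b := 1) (r := 1 - α)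
      (by linarith [hα.2]))
    rw [intervalIntegrable_iff_integrableOn_Ioc_of_le zero_le_one] at h
    refine h.congr_fun ?_ measurableSet_Ioc
    intro y hy
    have hy0 : 0 < y := hy.1
    simp only [g]
    rw [min_eq_right (by nlinarith [hy.2]), ← Real.rpow_natCast, ← Real.rpow_add hy0]
    congr 1; push_cast; ring
  · have h := integrableOn_Ioi_rpow_of_lt (a := -α) (by linarith [hα.1]) (zero_lt_one' ℝ)
    refine h.congr_fun ?_ measurableSet_Ioi
    intro y hy
    have hy1 : 1 < y := hy
    have hy0 : 0 < y := by linarith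
    simp only [g]
    rw [min_eq_left (by nlinarith)]
    nth_rewrite 2 [← Real.rpow_one y]
    rw [← Real.rpow_add hy0]
    congr 1; ring

/-- integrand -/
noncomputable def f (α : ℝ) (z : ℂ) (y : ℝ) : ℂ :=
  (Complex.exp (-(z * (y : ℂ))) - 1 + z * (y : ℂ)) * ((y ^ (-α - 1) : ℝ) : ℂ)

/-- derivative of integrand -/
noncomputable def f' (α : ℝ) (z : ℂ) (y : ℝ) : ℂ :=
  ((1 - Complex.exp (-(z * (y : ℂ)))) * y) * ((y ^ (-α - 1) : ℝ) : ℂ)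

lemma f_meas (α : ℝ) (z : ℂ) : Measurable (f α z) := by
  unfold f; fun_prop

lemma f'_meas (α : ℝ) (z : ℂ) : Measurable (f' α z) := by
  unfold f'; fun_prop

lemma re_mul {z : ℂ} (hz : 0 ≤ z.re) {y : ℝ} (hy : 0 < y) : 0 ≤ (z * (y : ℂ)).re := by
  simpa using mul_nonneg hz hy.le

lemma min_mul_le {R y t : ℝ} (hR : 1 ≤ R) (ht0 : 0 ≤ t) (ht : t ≤ R) (hy : 0 < y) :
    min (t * y) ((t * y) ^ 2) ≤ R ^ 2 * min y (y ^ 2) := by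
  rw [mul_min_of_nonneg _ _ (by positivity), mul_pow]
  apply min_le_min
  · have : R ≤ R ^ 2 := by nlinarith
    gcongr; linarith
  · gcongr

lemma min_mul_le' {R y t : ℝ} (hR : 1 ≤ R) (ht : t ≤ R) (hy : 0 < y) :
    min 1 (t * y) * y ≤ R * min y (y ^ 2) := by
  rw [mul_min_of_nonneg _ _ (by positivity), min_mul_of_nonneg _ _ hy.le]
  apply min_le_min
  · gcongr
  · rw [pow_two, ← mul_assoc]; gcongr

lemma f_bound {α R : ℝ} {z : ℂ} (hz : 0 ≤ z.re) (hR : 1 ≤ R) (hzR : ‖z‖ ≤ R) {y : ℝ}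
    (hy : 0 < y) : ‖f α z y‖ ≤ 3 * R ^ 2 * g α y := by
  have h := bound2 (re_mul hz hy)
  have hn : ‖z * (y : ℂ)‖ = ‖z‖ * y := by simp [abs_of_pos hy]
  have hp : 0 < y ^ (-α - 1) := Real.rpow_pos_of_pos hy _
  rw [hn] at h
  have h2 := min_mul_le hR (norm_nonneg z) hzR hy
  rw [f, norm_mul, Complex.norm_real, Real.norm_of_nonneg hp.le, g, ← mul_assoc]
  gcongr
  linarith

lemma f'_bound {α R : ℝ} {z : ℂ} (hz : 0 ≤ z.re) (hR : 1 ≤ R) (hzR : ‖z‖ ≤ R) {y : ℝ}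
    (hy : 0 < y) : ‖f' α z y‖ ≤ 2 * R * g α y := by
  have h := bound1 (re_mul hz hy)
  have hn : ‖z * (y : ℂ)‖ = ‖z‖ * y := by simp [abs_of_pos hy]
  have hp : 0 < y ^ (-α - 1) := Real.rpow_pos_of_pos hy _
  rw [hn] at h
  have h2 := min_mul_le' hR hzR hy
  rw [f', norm_mul, norm_mul, Complex.norm_real, Complex.norm_real, Real.norm_of_nonneg hp.le,
    Real.norm_of_nonneg hy.le, g, ← mul_assoc]
  have := mul_le_mul_of_nonneg_right h hy.le
  refine mul_le_mul_of_nonneg_right ?_ hp.le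
  linarith

lemma f_int {α : ℝ} (hα : α ∈ Set.Ioo (1:ℝ) 2) {z : ℂ} (hz : 0 ≤ z.re) :
    IntegrableOn (f α z) (Set.Ioi 0) := by
  refine Integrable.mono' ((g_int hα).const_mul (3 * (max 1 ‖z‖) ^ 2))
    (f_meas α z).aestronglyMeasurable ?_
  filter_upwards [ae_restrict_mem measurableSet_Ioi] with y hy
  exact f_bound hz (le_max_left _ _) (le_max_right _ _) hy

lemma f'_int {α : ℝ} (hα : α ∈ Set.Ioo (1:ℝ) 2) {z : ℂ} (hz : 0 ≤ z.re) :
    IntegrableOn (f' α z) (Set.Ioi 0) := by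
  refine Integrable.mono' ((g_int hα).const_mul (2 * (max 1 ‖z‖)))
    (f'_meas α z).aestronglyMeasurable ?_
  filter_upwards [ae_restrict_mem measurableSet_Ioi] with y hy
  exact f'_bound hz (le_max_left _ _) (le_max_right _ _) hy

/-- the integral -/
noncomputable def F (α : ℝ) (z : ℂ) : ℂ := ∫ y in Set.Ioi (0:ℝ), f α z y

lemma F_diff {α : ℝ} (hα : α ∈ Set.Ioo (1:ℝ) 2) :
    DifferentiableOn ℂ (F α) {z : ℂ | 0 < z.re} := by
  intro z hz
  have hz0 : 0 < z.re := hz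
  apply DifferentiableAt.differentiableWithinAt
  have ho : IsOpen ({z : ℂ | 0 < z.re} ∩ {w : ℂ | ‖w‖ < ‖z‖ + 1}) :=
    (isOpen_lt continuous_const Complex.continuous_re).inter
      (isOpen_lt continuous_norm continuous_const)
  have := hasDerivAt_integral_of_dominated_loc_of_deriv_le (𝕜 := ℂ)
    (μ := volume.restrict (Set.Ioi (0:ℝ))) (F := f α) (F' := f' α) (x₀ := z)
    (bound := fun y => 2 * (‖z‖ + 1) * g α y)
    (ho.mem_nhds ⟨hz, by simp⟩)
    (Filter.Eventually.of_forall fun w => (f_meas α w).aestronglyMeasurable)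
    (f_int hα hz0.le) (f'_meas α z).aestronglyMeasurable ?_ ((g_int hα).const_mul _) ?_
  · exact this.2.differentiableAt
  · filter_upwards [ae_restrict_mem measurableSet_Ioi] with y hy w hw
    exact f'_bound (le_of_lt hw.1) (by linarith [norm_nonneg z]) (le_of_lt hw.2) hy
  · filter_upwards with y w hw
    have h1 : HasDerivAt (fun w : ℂ => w * (y : ℂ)) y w := by
      simpa using (hasDerivAt_id w).mul_const (y : ℂ)
    have h2 := (((h1.fun_neg.cexp).sub_const 1).add h1).mul_const ((y ^ (-α - 1) : ℝ) : ℂ)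
    refine h2.congr_deriv ?_
    rw [f']; ring

lemma F_real {α : ℝ} {r : ℝ} (hr : 0 < r) : F α r = (r : ℂ) ^ (α : ℂ) * F α 1 := by
  have h := integral_comp_mul_left_Ioi (f α 1) 0 hr
  have h2 : F α r = ∫ y in Set.Ioi (0:ℝ), ((r ^ (α + 1) : ℝ) : ℂ) * f α 1 (r * y) := by
    refine setIntegral_congr_fun measurableSet_Ioi fun y hy => ?_
    have hy0 : 0 < y := hy
    simp only [f, one_mul]
    rw [Real.mul_rpow hr.le hy0.le]
    have : r ^ (α + 1) * r ^ (-α - 1) = 1 := by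
      rw [← Real.rpow_add hr]; ring_nf; simp
    have h3 : ((r ^ (α + 1) : ℝ) : ℂ) * ((r ^ (-α - 1) : ℝ) : ℂ) = 1 := by exact_mod_cast this
    push_cast at h3 ⊢
    linear_combination -(Complex.exp (-(r * y)) - 1 + r * y) * (y ^ (-α - 1) : ℝ) * h3
  rw [h2, integral_const_mul, h, mul_zero, Real.rpow_add hr, Real.rpow_one,
    ← Complex.ofReal_cpow hr.le]
  change _ * (_ • F α 1) = _
  rw [Complex.real_smul]
  have : (r : ℂ) ≠ 0 := by exact_mod_cast hr.ne'
  push_cast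
  field_simp

lemma tendsto_rpow_zero {s : ℝ} (hs : 0 < s) (c : ℝ) :
    Filter.Tendsto (fun y : ℝ => c * y ^ s) (nhdsWithin 0 (Set.Ioi 0)) (nhds 0) := by
  have h : ContinuousAt (fun y : ℝ => c * y ^ s) 0 :=
    continuousAt_const.mul (Real.continuousAt_rpow_const 0 s (Or.inr hs.le))
  have h2 := h.tendsto
  simp only [Real.zero_rpow hs.ne', mul_zero] at h2
  exact h2.mono_left nhdsWithin_le_nhds

lemma tendsto_rpow_infty {s : ℝ} (hs : s < 0) (c : ℝ) :
    Filter.Tendsto (fun y : ℝ => c * y ^ s) Filter.atTop (nhds 0) := by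
  have h := (tendsto_rpow_neg_atTop (y := -s) (by linarith)).const_mul c
  simpa using h

lemma hasDeriv_pow {s : ℝ} (hs : s ≠ 0) {y : ℝ} (hy : 0 < y) :
    HasDerivAt (fun y : ℝ => ((y ^ s / s : ℝ) : ℂ)) ((y ^ (s - 1) : ℝ) : ℂ) y := by
  have h := ((Real.hasDerivAt_rpow_const (x := y) (p := s) (Or.inl hy.ne')).div_const s)
  have h2 := h.ofReal_comp
  refine h2.congr_deriv ?_
  congr 1
  field_simp

lemma hasDeriv_exp (y : ℝ) :
    HasDerivAt (fun y : ℝ => Complex.exp (-(1 * (y:ℂ)))) (-Complex.exp (-(1 * (y:ℂ)))) y := by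
  have h : HasDerivAt (fun y : ℝ => (y : ℂ)) 1 y := by
    simpa using (hasDerivAt_id y).ofReal_comp
  refine ((h.const_mul 1).fun_neg.cexp).congr_deriv (by ring)

lemma F_one_a {α : ℝ} (hα : α ∈ Set.Ioo (1:ℝ) 2) :
    F α 1 = (1 / α : ℂ) * ∫ y in Set.Ioi (0:ℝ), f' α 1 y := by
  obtain ⟨h1, h2⟩ := hα
  have hα0 : 0 < α := by linarith
  have hαc : (α : ℂ) ≠ 0 := by exact_mod_cast hα0.ne'
  have e : ∀ y ∈ Set.Ioi (0:ℝ), (1 - Complex.exp (-(1 * (y:ℂ)))) * ((y ^ (-α) / (-α) : ℝ) : ℂ)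
      = -(1 / α : ℂ) * f' α 1 y := by
    intro y hy
    have : y ^ (-α) = y * y ^ (-α - 1) := by
      rw [Real.rpow_sub_one (ne_of_gt hy)]; field_simp [ne_of_gt (show 0 < y from hy)]
    rw [this, f']; push_cast; field_simp
  have nb : ∀ y : ℝ, 0 < y → ‖(Complex.exp (-(1 * (y:ℂ))) - 1 + 1 * (y:ℂ)) *
      ((y ^ (-α) / (-α) : ℝ) : ℂ)‖ ≤ 3 * min y (y ^ 2) * (y ^ (-α) / α) := by
    intro y hy
    have h := bound2 (re_mul (z := 1) (by simp) hy)
    have hn : ‖(1:ℂ) * (y : ℂ)‖ = y := by simp [abs_of_pos hy]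
    rw [hn] at h
    have hp : 0 < y ^ (-α) := Real.rpow_pos_of_pos hy _
    rw [norm_mul, Complex.norm_real, norm_div, norm_neg, Real.norm_of_nonneg hp.le,
      Real.norm_of_nonneg hα0.le]
    gcongr
  have key := integral_Ioi_mul_deriv_eq_deriv_mul (a := 0) (a' := (0:ℂ)) (b' := 0)
    (u := fun y : ℝ => Complex.exp (-(1 * (y:ℂ))) - 1 + 1 * (y:ℂ))
    (u' := fun y : ℝ => 1 - Complex.exp (-(1 * (y:ℂ))))
    (v := fun y : ℝ => ((y ^ (-α) / (-α) : ℝ) : ℂ))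
    (v' := fun y : ℝ => ((y ^ (-α - 1) : ℝ) : ℂ)) ?_ ?_ ?_ ?_ ?_ ?_
  · change F α 1 = _ at key
    rw [key, setIntegral_congr_fun measurableSet_Ioi e, integral_const_mul]
    ring
  · intro y _
    have h : HasDerivAt (fun y : ℝ => (y : ℂ)) 1 y := by
      simpa using (hasDerivAt_id y).ofReal_comp
    exact (((hasDeriv_exp y).sub_const 1).add (h.const_mul 1)).congr_deriv (by ring)
  · intro y hy
    exact hasDeriv_pow (by linarith) hy
  · exact f_int ⟨h1, h2⟩ (z := 1) (by simp)
  · have := (f'_int ⟨h1, h2⟩ (z := 1) (by simp)).const_mul (-(1 / α : ℂ))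
    exact IntegrableOn.congr_fun this (fun y hy => (e y hy).symm) measurableSet_Ioi
  · refine squeeze_zero_norm' ?_ (tendsto_rpow_zero (s := 2 - α) (by linarith) (3 / α))
    filter_upwards [self_mem_nhdsWithin] with y hy
    have hy0 : 0 < y := hy
    refine (nb y hy).trans ?_
    have : y ^ (2 - α) = y ^ 2 * y ^ (-α) := by
      rw [sub_eq_add_neg, Real.rpow_add hy0]; norm_num
    rw [this]
    have hp : 0 < y ^ (-α) := Real.rpow_pos_of_pos hy _
    calc _ ≤ 3 * y ^ 2 * (y ^ (-α) / α) := by gcongr; exact min_le_right _ _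
      _ = _ := by ring
  · refine squeeze_zero_norm' ?_ (tendsto_rpow_infty (s := 1 - α) (by linarith) (3 / α))
    filter_upwards [Filter.eventually_gt_atTop 0] with y hy
    refine (nb y hy).trans ?_
    have : y ^ (1 - α) = y * y ^ (-α) := by
      rw [sub_eq_add_neg, Real.rpow_add hy]; norm_num
    rw [this]
    have hp : 0 < y ^ (-α) := Real.rpow_pos_of_pos hy _
    calc _ ≤ 3 * y * (y ^ (-α) / α) := by gcongr; exact min_le_left _ _
      _ = _ := by ring

lemma F_one_b {α : ℝ} (hα : α ∈ Set.Ioo (1:ℝ) 2) :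
    ∫ y in Set.Ioi (0:ℝ), f' α 1 y = (1 / (α - 1) : ℂ) * (Real.Gamma (2 - α) : ℂ) := by
  obtain ⟨h1, h2⟩ := hα
  have hα0 : 0 < α - 1 := by linarith
  have hαc : ((α - 1 : ℝ) : ℂ) ≠ 0 := by exact_mod_cast hα0.ne'
  have hαc' : ((1 - α : ℝ) : ℂ) ≠ 0 := by exact_mod_cast (by linarith : 1 - α < 0).ne
  have e0 : ∀ y ∈ Set.Ioi (0:ℝ), f' α 1 y =
      (1 - Complex.exp (-(1 * (y:ℂ)))) * ((y ^ ((1 - α) - 1) : ℝ) : ℂ) := by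
    intro y hy
    have : y ^ ((1 - α) - 1) = y * y ^ (-α - 1) := by
      rw [show (1 - α) - 1 = (-α - 1) + 1 by ring, Real.rpow_add_one (ne_of_gt hy), mul_comm]
    rw [this, f']; push_cast; ring
  have e : ∀ y ∈ Set.Ioi (0:ℝ), Complex.exp (-(1 * (y:ℂ))) * ((y ^ (1 - α) / (1 - α) : ℝ) : ℂ)
      = -(1 / (α - 1) : ℂ) * ((Real.exp (-y) * y ^ ((2 - α) - 1) : ℝ) : ℂ) := by
    intro y hy
    rw [show (2 - α) - 1 = 1 - α by ring]
    push_cast at hαc hαc' ⊢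
    rw [one_mul]
    field_simp
    ring
  have nb : ∀ y : ℝ, 0 < y → ‖(1 - Complex.exp (-(1 * (y:ℂ)))) *
      ((y ^ (1 - α) / (1 - α) : ℝ) : ℂ)‖ ≤ 2 * min 1 y * (y ^ (1 - α) / (α - 1)) := by
    intro y hy
    have h := bound1 (re_mul (z := 1) (by simp) hy)
    have hn : ‖(1:ℂ) * (y : ℂ)‖ = y := by simp [abs_of_pos hy]
    rw [hn] at h
    have hp : 0 < y ^ (1 - α) := Real.rpow_pos_of_pos hy _
    rw [norm_mul, Complex.norm_real, norm_div, norm_sub_rev 1 α, Real.norm_of_nonneg hp.le,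
      Real.norm_of_nonneg hα0.le]
    gcongr
  have key := integral_Ioi_mul_deriv_eq_deriv_mul (a := 0) (a' := (0:ℂ)) (b' := 0)
    (u := fun y : ℝ => 1 - Complex.exp (-(1 * (y:ℂ))))
    (u' := fun y : ℝ => Complex.exp (-(1 * (y:ℂ))))
    (v := fun y : ℝ => ((y ^ (1 - α) / (1 - α) : ℝ) : ℂ))
    (v' := fun y : ℝ => ((y ^ ((1 - α) - 1) : ℝ) : ℂ)) ?_ ?_ ?_ ?_ ?_ ?_
  · rw [setIntegral_congr_fun measurableSet_Ioi e0, key,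
      setIntegral_congr_fun measurableSet_Ioi e, integral_const_mul, integral_complex_ofReal,
      Real.Gamma_eq_integral (by linarith)]
    ring
  · intro y _
    exact ((hasDeriv_exp y).const_sub 1).congr_deriv (by ring)
  · intro y hy
    exact hasDeriv_pow (by linarith) hy
  · exact IntegrableOn.congr_fun (f'_int ⟨h1, h2⟩ (z := 1) (by simp)) e0 measurableSet_Ioi
  · have := ((Real.GammaIntegral_convergent (s := 2 - α) (by linarith)).ofReal (𝕜 := ℂ)).const_mul
      (-(1 / (α - 1) : ℂ))
    exact IntegrableOn.congr_fun this (fun y hy => (e y hy).symm) measurableSet_Ioi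
  · refine squeeze_zero_norm' ?_ (tendsto_rpow_zero (s := 2 - α) (by linarith) (2 / (α - 1)))
    filter_upwards [self_mem_nhdsWithin] with y hy
    have hy0 : 0 < y := hy
    refine (nb y hy).trans ?_
    have : y ^ (2 - α) = y * y ^ (1 - α) := by
      rw [show 2 - α = (1 - α) + 1 by ring, Real.rpow_add_one (ne_of_gt hy0), mul_comm]
    rw [this]
    have hp : 0 < y ^ (1 - α) := Real.rpow_pos_of_pos hy _
    calc _ ≤ 2 * y * (y ^ (1 - α) / (α - 1)) := by gcongr; exact min_le_right _ _
      _ = _ := by ring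
  · refine squeeze_zero_norm' ?_ (tendsto_rpow_infty (s := 1 - α) (by linarith) (2 / (α - 1)))
    filter_upwards [Filter.eventually_gt_atTop 0] with y hy
    refine (nb y hy).trans ?_
    have hp : 0 < y ^ (1 - α) := Real.rpow_pos_of_pos hy _
    calc _ ≤ 2 * 1 * (y ^ (1 - α) / (α - 1)) := by gcongr; exact min_le_left _ _
      _ = _ := by ring

lemma F_open {α : ℝ} (hα : α ∈ Set.Ioo (1:ℝ) 2) :
    Set.EqOn (F α) (fun z => z ^ (α : ℂ) * F α 1) {z : ℂ | 0 < z.re} := by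
  have ho : IsOpen {z : ℂ | 0 < z.re} := isOpen_lt continuous_const Complex.continuous_re
  have hg : DifferentiableOn ℂ (fun z : ℂ => z ^ (α : ℂ) * F α 1) {z : ℂ | 0 < z.re} := by
    intro z hz
    apply DifferentiableAt.differentiableWithinAt
    exact (differentiableAt_id.cpow_const (Or.inl hz)).mul_const _
  refine ((F_diff hα).analyticOnNhd ho).eqOn_of_preconnected_of_frequently_eq
    (hg.analyticOnNhd ho) (convex_halfSpace_re_gt 0).isPreconnected (z₀ := 1) (by simp) ?_
  have ht : Filter.Tendsto (fun r : ℝ => (r : ℂ)) (nhdsWithin 1 (Set.Ioi 1))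
      (nhdsWithin 1 {1}ᶜ) := by
    refine tendsto_nhdsWithin_iff.mpr ⟨?_, ?_⟩
    · have := (Complex.continuous_ofReal.tendsto 1)
      rw [Complex.ofReal_one] at this
      exact this.mono_left nhdsWithin_le_nhds
    · filter_upwards [self_mem_nhdsWithin] with r hr
      have : r ≠ 1 := ne_of_gt hr
      simpa using this
  refine ht.frequently (Filter.Eventually.frequently ?_)
  filter_upwards [self_mem_nhdsWithin] with r hr
  exact F_real (lt_trans one_pos hr)

lemma F_closed {α : ℝ} (hα : α ∈ Set.Ioo (1:ℝ) 2) {z : ℂ} (hz : 0 ≤ z.re) :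
    F α z = z ^ (α : ℂ) * F α 1 := by
  by_cases hz0 : z = 0
  · have : (α : ℂ) ≠ 0 := by exact_mod_cast (by linarith [hα.1] : 0 < α).ne'
    subst hz0
    simp [F, f, Complex.zero_cpow this]
  have hs : z ∈ slitPlane := by
    rcases hz.lt_or_eq with h | h
    · exact Or.inl h
    · right
      intro hi
      exact hz0 (Complex.ext h.symm hi)
  have ht : Filter.Tendsto (fun r : ℝ => z + r) (nhdsWithin 0 (Set.Ioi 0)) (nhds z) := by
    have : Continuous (fun r : ℝ => z + r) := by fun_prop
    have := this.tendsto 0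
    simp only [Complex.ofReal_zero, add_zero] at this
    exact this.mono_left nhdsWithin_le_nhds
  have h1 := ((continuousAt_cpow_const (b := (α : ℂ)) hs).tendsto.comp ht).mul_const (F α 1)
  have h2 : Filter.Tendsto (fun r : ℝ => F α (z + r)) (nhdsWithin 0 (Set.Ioi 0))
      (nhds (F α z)) := by
    refine tendsto_integral_filter_of_dominated_convergence
      (fun y => 3 * (‖z‖ + 1) ^ 2 * g α y) ?_ ?_ ((g_int hα).const_mul _) ?_
    · exact Filter.Eventually.of_forall fun r => (f_meas α _).aestronglyMeasurable
    · filter_upwards [Ioc_mem_nhdsGT (zero_lt_one' ℝ)] with r hr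
      filter_upwards [ae_restrict_mem measurableSet_Ioi] with y hy
      refine f_bound ?_ (by linarith [norm_nonneg z]) ?_ hy
      · simp; linarith [hr.1]
      · refine (norm_add_le _ _).trans ?_
        rw [Complex.norm_real, Real.norm_of_nonneg hr.1.le]
        linarith [hr.2]
    · refine Filter.Eventually.of_forall fun y => ?_
      have : Continuous (fun w => f α w y) := by unfold f; fun_prop
      exact (this.tendsto z).comp ht
  refine tendsto_nhds_unique h2 (h1.congr' ?_)
  filter_upwards [self_mem_nhdsWithin] with r hr
  refine (F_open hα ?_).symm
  have : 0 < r := hr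
  simp; linarith

end CpowAux

theorem cpow_integral_representation_alpha_gt_one (α : ℝ) (hα : α ∈ Set.Ioo (1:ℝ) 2)
    (z : ℂ) (hz : 0 ≤ z.re) :
    IntegrableOn (fun y : ℝ =>
        (Complex.exp (-(z * (y : ℂ))) - 1 + z * (y : ℂ)) * ((y ^ (-α - 1) : ℝ) : ℂ)) (Set.Ioi 0) ∧
    z ^ (α : ℂ) = ((α * (α - 1) / Real.Gamma (2 - α) : ℝ) : ℂ) *
      ∫ y in Set.Ioi (0:ℝ),
        (Complex.exp (-(z * (y : ℂ))) - 1 + z * (y : ℂ)) * ((y ^ (-α - 1) : ℝ) : ℂ) := by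
  refine ⟨CpowAux.f_int hα hz, ?_⟩
  have h := CpowAux.F_closed hα hz
  rw [CpowAux.F_one_a hα, CpowAux.F_one_b hα] at h
  change _ = _ * CpowAux.F α z
  rw [h]
  have h1 : (α : ℂ) ≠ 0 := by exact_mod_cast (by linarith [hα.1] : 0 < α).ne'
  have h2 : (α : ℂ) - 1 ≠ 0 := by exact_mod_cast (by linarith [hα.1] : 0 < α - 1).ne'
  have h3 : (Real.Gamma (2 - α) : ℂ) ≠ 0 := by
    exact_mod_cast (Real.Gamma_pos_of_pos (by linarith [hα.2] : 0 < 2 - α)).ne'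
  push_cast
  field_simp
end

section
/- Let α ∈ (0,1), λ ≥ 0 and ξ ∈ ℝ. Then, with z^α the principal branch of the complex power, (λ + iξ)^α + (λ − iξ)^α − 2λ^α = (α/Γ(1−α)) · ∫₀^∞ 4·sin²(ξy/2) · e^{−λy} · y^{−α−1} dy. In particular (λ + iξ)^α + (λ − iξ)^α − 2λ^α is a nonnegative real number, and it is strictly positive whenever ξ ≠ 0. -/
open Complex MeasureTheory

lemma ts_norm_bound (w : ℂ) (hw : 0 ≤ w.re) : ‖1 - cexp (-w)‖ ≤ 2 * min ‖w‖ 1 := by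
  have h2 : ‖1 - cexp (-w)‖ ≤ 2 := by
    calc _ ≤ ‖(1:ℂ)‖ + ‖cexp (-w)‖ := norm_sub_le _ _
      _ ≤ 1 + 1 := by
        rw [Complex.norm_exp]
        have : Real.exp ((-w).re) ≤ 1 := by
          rw [Real.exp_le_one_iff]; simpa using hw
        simp only [norm_one]; linarith
      _ = 2 := by norm_num
  rcases le_total ‖w‖ 1 with h | h
  · rw [min_eq_left h, norm_sub_rev]
    simpa using Complex.norm_exp_sub_one_le (x := -w) (by simpa using h)
  · rw [min_eq_right h]; linarith

lemma ts_int_bound {α : ℝ} (h0 : 0 < α) (h1 : α < 1) :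
    IntegrableOn (fun y : ℝ => min y 1 * y ^ (-α - 1)) (Set.Ioi 0) := by
  rw [← Set.Ioc_union_Ioi_eq_Ioi zero_le_one, integrableOn_union]
  constructor
  · have : IntegrableOn (fun y : ℝ => y ^ (-α)) (Set.Ioc 0 1) := by
      rw [← intervalIntegrable_iff_integrableOn_Ioc_of_le zero_le_one]
      exact intervalIntegral.intervalIntegrable_rpow' (by linarith)
    refine this.congr_fun (fun y hy => ?_) measurableSet_Ioc
    simp only [min_eq_left hy.2]
    rw [Real.rpow_sub_one hy.1.ne']
    field_simp [hy.1.ne']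
  · refine (integrableOn_Ioi_rpow_of_lt (by linarith : -α - 1 < -1) one_pos).congr_fun
      (fun y hy => ?_) measurableSet_Ioi
    simp [min_eq_right (le_of_lt (Set.mem_Ioi.1 hy))]

lemma ts_meas (α : ℝ) (z : ℂ) : Measurable
    (fun y : ℝ => (1 - cexp (-(z * y))) * ((y ^ (-α - 1) : ℝ) : ℂ)) := by fun_prop

lemma ts_pt_bound {α R y : ℝ} {z : ℂ} (hz : 0 ≤ z.re) (hR : ‖z‖ ≤ R) (hR1 : 1 ≤ R) (hy : 0 < y) :
    ‖(1 - cexp (-(z * y))) * ((y ^ (-α - 1) : ℝ) : ℂ)‖ ≤ 2 * R * (min y 1 * y ^ (-α - 1)) := by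
  have hp : 0 ≤ y ^ (-α - 1) := Real.rpow_nonneg hy.le _
  rw [norm_mul, Complex.norm_real, Real.norm_of_nonneg hp]
  have h := ts_norm_bound (z * y) (by simpa using mul_nonneg hz hy.le)
  rw [norm_mul, Complex.norm_real, Real.norm_of_nonneg hy.le] at h
  have h' : min (‖z‖ * y) 1 ≤ R * min y 1 := by
    rcases le_total y 1 with h1 | h1
    · rw [min_eq_left h1]; exact (min_le_left _ _).trans (by gcongr)
    · rw [min_eq_right h1]; exact (min_le_right _ _).trans (by linarith)
  calc _ ≤ (2 * (R * min y 1)) * y ^ (-α - 1) := by gcongr; linarith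
    _ = _ := by ring

lemma ts_integrable {α : ℝ} (h0 : 0 < α) (h1 : α < 1) {z : ℂ} (hz : 0 ≤ z.re) :
    IntegrableOn (fun y : ℝ => (1 - cexp (-(z * y))) * ((y ^ (-α - 1) : ℝ) : ℂ)) (Set.Ioi 0) := by
  refine Integrable.mono' ((ts_int_bound h0 h1).const_mul (2 * (‖z‖ + 1)))
    (ts_meas α z).aestronglyMeasurable ?_
  filter_upwards [ae_restrict_mem measurableSet_Ioi] with y hy
  exact ts_pt_bound hz (by linarith) (by linarith [norm_nonneg z]) hy

lemma ts_cont {α : ℝ} (h0 : 0 < α) (h1 : α < 1) : ContinuousOn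
    (fun z : ℂ => ∫ y in Set.Ioi (0:ℝ), (1 - cexp (-(z * y))) * ((y ^ (-α - 1) : ℝ) : ℂ))
    {z : ℂ | 0 ≤ z.re} := by
  intro z hz
  refine continuousWithinAt_of_dominated
    (bound := fun y => 2 * (‖z‖ + 1) * (min y 1 * y ^ (-α - 1))) ?_ ?_
    ((ts_int_bound h0 h1).const_mul (2 * (‖z‖ + 1))) ?_
  · exact Filter.Eventually.of_forall fun z => (ts_meas α z).aestronglyMeasurable
  · have : ∀ᶠ x in nhdsWithin z {z : ℂ | 0 ≤ z.re}, ‖x‖ < ‖z‖ + 1 :=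
      (continuous_norm.continuousWithinAt).eventually_lt continuousWithinAt_const (by simp)
    filter_upwards [this, self_mem_nhdsWithin] with x hx hx0
    filter_upwards [ae_restrict_mem measurableSet_Ioi] with y hy
    exact ts_pt_bound hx0 hx.le (by linarith [norm_nonneg z]) hy
  · refine Filter.Eventually.of_forall fun y => ?_
    apply Continuous.continuousWithinAt
    fun_prop

lemma ts_deriv {α : ℝ} (h0 : 0 < α) (h1 : α < 1) {z : ℂ} (hz : 0 < z.re) : HasDerivAt
    (fun z : ℂ => ∫ y in Set.Ioi (0:ℝ), (1 - cexp (-(z * y))) * ((y ^ (-α - 1) : ℝ) : ℂ))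
    (∫ y in Set.Ioi (0:ℝ), (y * cexp (-(z * y))) * ((y ^ (-α - 1) : ℝ) : ℂ)) z := by
  refine (hasDerivAt_integral_of_dominated_loc_of_deriv_le
    (s := {w : ℂ | z.re / 2 < w.re}) (bound := fun y => y ^ (-α) * Real.exp (-(z.re/2) * y))
    (F' := fun (z : ℂ) (y : ℝ) => (y * cexp (-(z * y))) * ((y ^ (-α - 1) : ℝ) : ℂ))
    (F := fun (z : ℂ) (y : ℝ) => (1 - cexp (-(z * y))) * ((y ^ (-α - 1) : ℝ) : ℂ))
    ?_ ?_ (ts_integrable h0 h1 hz.le) ?_ ?_ ?_ ?_).2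
  · exact (isOpen_lt continuous_const continuous_re).mem_nhds (by simp; linarith)
  · exact Filter.Eventually.of_forall fun z => (ts_meas α z).aestronglyMeasurable
  · apply Measurable.aestronglyMeasurable; fun_prop
  · filter_upwards [ae_restrict_mem measurableSet_Ioi] with y hy x hx
    have hy : 0 < y := hy
    have hp : 0 ≤ y ^ (-α - 1) := Real.rpow_nonneg hy.le _
    have e : y ^ (-α) = y * y ^ (-α - 1) := by
      rw [Real.rpow_sub_one hy.ne']; field_simp
    rw [norm_mul, norm_mul, Complex.norm_real, Complex.norm_real, Real.norm_of_nonneg hp,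
      Real.norm_of_nonneg hy.le, Complex.norm_exp, e]
    have : Real.exp ((-(x * y)).re) ≤ Real.exp (-(z.re/2) * y) := by
      apply Real.exp_le_exp.2
      have hx : z.re / 2 < x.re := hx
      simp
      nlinarith
    calc _ ≤ y * Real.exp (-(z.re/2) * y) * y ^ (-α - 1) := by gcongr
      _ = _ := by ring
  · have := integrableOn_rpow_mul_exp_neg_mul_rpow (s := -α) (p := 1) (b := z.re/2)
      (by linarith) one_pos (by linarith)
    simpa [IntegrableOn] using this
  · refine Filter.Eventually.of_forall fun y x _ => ?_
    have h : HasDerivAt (fun x : ℂ => 1 - cexp (-(x * y))) (y * cexp (-(x * y))) x := by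
      have := (((hasDerivAt_id x).mul_const (y:ℂ)).neg.cexp).const_sub 1
      have e : -(cexp (-(x * y)) * -(1 * (y:ℂ))) = y * cexp (-(x * y)) := by ring
      rw [← e]
      exact this
    exact h.mul_const _

lemma ts_main {α : ℝ} (h0 : 0 < α) (h1 : α < 1) {z : ℂ} (hz : 0 ≤ z.re) :
    ∫ y in Set.Ioi (0:ℝ), (1 - cexp (-(z * y))) * ((y ^ (-α - 1) : ℝ) : ℂ) =
      ((Real.Gamma (1 - α) / α : ℝ) : ℂ) * z ^ (α : ℂ) := by
  set F : ℂ → ℂ := fun z : ℂ => ∫ y in Set.Ioi (0:ℝ),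
    (1 - cexp (-(z * y))) * ((y ^ (-α - 1) : ℝ) : ℂ) with hF
  set U : Set ℂ := {z : ℂ | 0 < z.re} with hU
  have hUo : IsOpen U := isOpen_lt continuous_const continuous_re
  have hUc : IsPreconnected U := (convex_halfSpace_re_gt 0).isPreconnected
  have hFd : DifferentiableOn ℂ F U := fun z hz =>
    (ts_deriv h0 h1 hz).differentiableAt.differentiableWithinAt
  have hgd : DifferentiableOn ℂ (fun z : ℂ => (Real.Gamma (1 - α) : ℂ) * z ^ ((α:ℂ) - 1)) U := by
    intro z hz
    have : z ∈ slitPlane := Or.inl hz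
    exact ((differentiableAt_id.cpow_const this).const_mul _).differentiableWithinAt
  have key : Set.EqOn (deriv F) (fun z : ℂ => (Real.Gamma (1 - α) : ℂ) * z ^ ((α:ℂ) - 1)) U := by
    refine ((hFd.analyticOnNhd hUo).deriv).eqOn_of_preconnected_of_frequently_eq
      (hgd.analyticOnNhd hUo) hUc (z₀ := 1) (by simp [hU]) ?_
    have hr : ∀ r : ℝ, 0 < r → deriv F r = (Real.Gamma (1 - α) : ℂ) * (r:ℂ) ^ ((α:ℂ) - 1) := by
      intro r hr
      rw [(ts_deriv h0 h1 (z := r) (by simpa using hr)).deriv]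
      have := Real.integral_rpow_mul_exp_neg_mul_Ioi (a := 1 - α) (r := r) (by linarith) hr
      have e : (r:ℂ) ^ ((α:ℂ) - 1) = (((1 / r) ^ (1 - α) : ℝ) : ℂ) := by
        rw [one_div, Real.inv_rpow hr.le, ← Real.rpow_neg hr.le, neg_sub,
          Complex.ofReal_cpow hr.le]
        simp
      rw [e, mul_comm, ← Complex.ofReal_mul, ← this, ← integral_complex_ofReal]
      refine setIntegral_congr_fun measurableSet_Ioi fun y hy => ?_
      have hy : 0 < y := hy
      have e : y ^ (1 - α - 1) = y * y ^ (-α - 1) := by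
        rw [Real.rpow_sub_one hy.ne' (-α)]; field_simp; congr 1; ring
      simp only [e]
      push_cast
      ring
    have ht : Filter.Tendsto (fun n : ℕ => ((1 + 1 / ((n:ℝ) + 1) : ℝ) : ℂ)) Filter.atTop
        (nhdsWithin 1 {1}ᶜ) := by
      rw [tendsto_nhdsWithin_iff]
      constructor
      · have := (tendsto_one_div_add_atTop_nhds_zero_nat (𝕜 := ℝ)).const_add 1
        have := (Complex.continuous_ofReal.tendsto _).comp this
        rw [add_zero, Complex.ofReal_one] at this
        exact this
      · refine Filter.Eventually.of_forall fun n => ?_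
        have : (0:ℝ) < 1 / ((n:ℝ) + 1) := by positivity
        simp only [Set.mem_compl_iff, Set.mem_singleton_iff]
        rw [← Complex.ofReal_one, Complex.ofReal_inj]
        linarith
    refine ht.frequently (Filter.Frequently.of_forall fun n => ?_)
    exact hr _ (by positivity)
  set H : ℂ → ℂ := fun z => F z - ((Real.Gamma (1 - α) / α : ℝ) : ℂ) * z ^ (α : ℂ) with hH
  have hHd : ∀ z ∈ U, HasDerivAt H 0 z := by
    intro z hz
    have hs : z ∈ slitPlane := Or.inl hz
    have a1 := (ts_deriv h0 h1 hz).differentiableAt.hasDerivAt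
    rw [key hz] at a1
    have a2 := (((hasDerivAt_id z).cpow_const (c := (α:ℂ)) hs).const_mul
      ((Real.Gamma (1 - α) / α : ℝ) : ℂ))
    have : (α:ℂ) ≠ 0 := by exact_mod_cast h0.ne'
    have e : (0:ℂ) = (Real.Gamma (1 - α) : ℂ) * z ^ ((α:ℂ) - 1) -
        ((Real.Gamma (1 - α) / α : ℝ) : ℂ) * ((α:ℂ) * z ^ ((α:ℂ) - 1) * 1) := by
      push_cast
      field_simp
      ring
    rw [e]
    exact a1.sub a2
  obtain ⟨c, hc⟩ := hUo.exists_is_const_of_deriv_eq_zero hUc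
    (fun z hz => (hHd z hz).differentiableAt.differentiableWithinAt)
    (fun z hz => (hHd z hz).deriv)
  have hcl : closure U = {z : ℂ | 0 ≤ z.re} := Complex.closure_setOfPred_lt_re 0
  have hHc : ContinuousOn H (closure U) := by
    rw [hcl]
    refine (ts_cont h0 h1).sub (ContinuousOn.mul continuousOn_const ?_)
    intro z hz
    exact (continuousAt_cpow_const_of_re_pos (Or.inl hz) (by simpa using h0)).continuousWithinAt
  have hall : Set.EqOn H (fun _ => c) (closure U) :=
    Set.EqOn.of_subset_closure (fun z hz => hc z hz) hHc continuousOn_const subset_closure le_rfl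
  have hz0 : H 0 = c := hall (by rw [hcl]; simp)
  have hz1 : H z = c := hall (by rw [hcl]; exact hz)
  have : H 0 = 0 := by
    have : (α:ℂ) ≠ 0 := by exact_mod_cast h0.ne'
    simp [hH, hF, this]
  rw [← hz0, this] at hz1
  exact sub_eq_zero.1 hz1

lemma ts_pt (α lam ξ y : ℝ) :
    ((4 * Real.sin (ξ*y/2)^2 * Real.exp (-(lam*y)) * y ^ (-α - 1) : ℝ) : ℂ) =
    (1 - cexp (-(((lam : ℂ) + Complex.I * (ξ : ℂ)) * y))) * ((y ^ (-α - 1) : ℝ) : ℂ)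
    + (1 - cexp (-(((lam : ℂ) - Complex.I * (ξ : ℂ)) * y))) * ((y ^ (-α - 1) : ℝ) : ℂ)
    - 2 * ((1 - cexp (-((lam : ℂ) * y))) * ((y ^ (-α - 1) : ℝ) : ℂ)) := by
  have e1 : cexp (-(((lam : ℂ) + Complex.I * (ξ : ℂ)) * y)) =
      cexp (-((lam : ℂ) * y)) * cexp (-((ξ * y : ℂ)) * I) := by
    rw [← Complex.exp_add]; congr 1; ring
  have e2 : cexp (-(((lam : ℂ) - Complex.I * (ξ : ℂ)) * y)) =
      cexp (-((lam : ℂ) * y)) * cexp ((ξ * y : ℂ) * I) := by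
    rw [← Complex.exp_add]; congr 1; ring
  have e3 : cexp ((ξ * y : ℂ) * I) + cexp (-((ξ * y : ℂ)) * I)
      = 2 - 4 * Complex.sin (ξ * y / 2) ^ 2 := by
    rw [← Complex.two_cos, Complex.sin_sq,
      show (ξ * y : ℂ) = 2 * (ξ * y / 2) by ring, Complex.cos_two_mul]
    ring_nf
  rw [e1, e2]
  push_cast
  linear_combination (cexp (-((lam : ℂ) * y)) * ((y ^ (-α - 1) : ℝ) : ℂ)) * e3

theorem tempered_symbol_positivity_alpha_lt_one (α lam ξ : ℝ)
    (hα : α ∈ Set.Ioo (0:ℝ) 1) (hlam : 0 ≤ lam) :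
    ((lam : ℂ) + Complex.I * (ξ : ℂ)) ^ (α : ℂ)
        + ((lam : ℂ) - Complex.I * (ξ : ℂ)) ^ (α : ℂ) - 2 * (lam : ℂ) ^ (α : ℂ) =
      (((α / Real.Gamma (1 - α)) *
        ∫ y in Set.Ioi (0:ℝ), 4 * Real.sin (ξ*y/2)^2 * Real.exp (-(lam*y)) * y ^ (-α - 1) : ℝ) : ℂ) ∧
    0 ≤ (α / Real.Gamma (1 - α)) *
        ∫ y in Set.Ioi (0:ℝ), 4 * Real.sin (ξ*y/2)^2 * Real.exp (-(lam*y)) * y ^ (-α - 1) ∧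
    (ξ ≠ 0 → 0 < (α / Real.Gamma (1 - α)) *
        ∫ y in Set.Ioi (0:ℝ), 4 * Real.sin (ξ*y/2)^2 * Real.exp (-(lam*y)) * y ^ (-α - 1)) := by
  obtain ⟨h0, h1⟩ := hα
  have hG : 0 < Real.Gamma (1 - α) := Real.Gamma_pos_of_pos (by linarith)
  have hc : 0 < α / Real.Gamma (1 - α) := div_pos h0 hG
  have r1 : 0 ≤ ((lam : ℂ) + Complex.I * (ξ : ℂ)).re := by simpa using hlam
  have r2 : 0 ≤ ((lam : ℂ) - Complex.I * (ξ : ℂ)).re := by simpa using hlam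
  have r3 : 0 ≤ ((lam : ℂ)).re := by simpa using hlam
  have i1 := ts_integrable h0 h1 r1
  have i2 := ts_integrable h0 h1 r2
  have i3 := (ts_integrable h0 h1 r3).const_mul 2
  have hint : IntegrableOn (fun y : ℝ =>
      4 * Real.sin (ξ*y/2)^2 * Real.exp (-(lam*y)) * y ^ (-α - 1)) (Set.Ioi 0) := by
    have h := ((i1.add i2).sub i3).re
    refine h.congr (Filter.Eventually.of_forall fun y => ?_)
    have := congrArg Complex.re (ts_pt α lam ξ y)
    rw [Complex.ofReal_re] at this
    exact this.symm
  have hnn : ∀ y ∈ Set.Ioi (0:ℝ),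
      0 ≤ 4 * Real.sin (ξ*y/2)^2 * Real.exp (-(lam*y)) * y ^ (-α - 1) := by
    intro y hy
    have : 0 ≤ y ^ (-α - 1) := Real.rpow_nonneg (le_of_lt hy) _
    positivity
  refine ⟨?_, mul_nonneg hc.le (setIntegral_nonneg measurableSet_Ioi hnn), fun hξ => ?_⟩
  · rw [Complex.ofReal_mul, ← integral_complex_ofReal]
    simp_rw [ts_pt]
    rw [integral_sub (by exact i1.add i2) i3, integral_add i1 i2, integral_const_mul,
      ts_main h0 h1 r1, ts_main h0 h1 r2, ts_main h0 h1 r3]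
    have a1 : (α:ℂ) ≠ 0 := by exact_mod_cast h0.ne'
    have a2 : (Real.Gamma (1 - α):ℂ) ≠ 0 := by exact_mod_cast hG.ne'
    push_cast
    field_simp
  · refine mul_pos hc ?_
    rw [setIntegral_pos_iff_support_of_nonneg_ae
      ((ae_restrict_mem measurableSet_Ioi).mono fun y hy => hnn y hy) hint]
    have hx : 0 < |ξ| := abs_pos.2 hξ
    have : Set.Ioo (0:ℝ) (1 / |ξ|) ⊆ Function.support (fun y : ℝ =>
      4 * Real.sin (ξ*y/2)^2 * Real.exp (-(lam*y)) * y ^ (-α - 1)) ∩ Set.Ioi 0 := by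
      intro y hy
      refine ⟨?_, hy.1⟩
      have hp : 0 < y ^ (-α - 1) := Real.rpow_pos_of_pos hy.1 _
      have hs : Real.sin (ξ*y/2) ≠ 0 := by
        have hb : |ξ * y / 2| < 1 := by
          rw [abs_div, abs_mul, abs_of_pos hy.1]
          have := (lt_div_iff₀ hx).1 hy.2
          norm_num; nlinarith
        have := abs_lt.1 hb
        intro h
        rw [Real.sin_eq_zero_iff_of_lt_of_lt (by linarith [Real.pi_gt_three])
          (by linarith [Real.pi_gt_three])] at h
        have : ξ * y ≠ 0 := mul_ne_zero hξ hy.1.ne'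
        apply this; linarith
      simp only [Function.mem_support]
      positivity
    refine lt_of_lt_of_le ?_ (measure_mono this)
    simp [hx]
end

section
/- Let α ∈ (1,2), λ ≥ 0 and ξ ∈ ℝ. Then, with z^α the principal branch of the complex power, (λ + iξ)^α + (λ − iξ)^α − 2λ^α = −(α(α−1)/Γ(2−α)) · ∫₀^∞ 4·sin²(ξy/2) · e^{−λy} · y^{−α−1} dy. In particular −((λ + iξ)^α + (λ − iξ)^α − 2λ^α) is a nonnegative real number, and it is strictly positive whenever ξ ≠ 0. -/
open Complex MeasureTheory

lemma aux_integrable (α lam ξ : ℝ) (hα : α ∈ Set.Ioo (1:ℝ) 2) (hlam : 0 ≤ lam) :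
    IntegrableOn (fun y : ℝ => 4 * Real.sin (ξ*y/2)^2 * Real.exp (-(lam*y)) * y ^ (-α - 1))
      (Set.Ioi 0) := by
  obtain ⟨h1, h2⟩ := hα
  have hm : Measurable
      (fun y : ℝ => 4 * Real.sin (ξ*y/2)^2 * Real.exp (-(lam*y)) * y ^ (-α - 1)) := by
    fun_prop
  have hs : Set.Ioi (0:ℝ) = Set.Ioc 0 1 ∪ Set.Ioi 1 := by
    rw [Set.Ioc_union_Ioi_eq_Ioi zero_le_one]
  rw [hs, integrableOn_union]
  have he : ∀ y : ℝ, 0 < y → Real.exp (-(lam*y)) ≤ 1 := fun y hy => by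
    rw [Real.exp_le_one_iff]; nlinarith [mul_nonneg hlam hy.le]
  constructor
  · have hi : IntegrableOn (fun y : ℝ => ξ^2 * y ^ (1 - α)) (Set.Ioc 0 1) := by
      apply Integrable.const_mul
      have := intervalIntegral.intervalIntegrable_rpow' (a := 0) (b := 1) (r := 1 - α) (by linarith)
      rwa [intervalIntegrable_iff_integrableOn_Ioc_of_le zero_le_one] at this
    refine Integrable.mono' hi hm.aestronglyMeasurable ?_
    refine (ae_restrict_iff' measurableSet_Ioc).mpr (Filter.Eventually.of_forall fun y hy => ?_)
    have hy0 : 0 < y := hy.1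
    have hp := Real.rpow_pos_of_pos hy0 (-α - 1)
    have hr : y ^ (1 - α) = y^2 * y ^ (-α - 1) := by
      rw [← Real.rpow_natCast, ← Real.rpow_add hy0]; congr 1; push_cast; ring
    rw [Real.norm_of_nonneg (by positivity), hr, ← mul_assoc]
    apply mul_le_mul_of_nonneg_right _ hp.le
    have hsin : Real.sin (ξ*y/2)^2 ≤ (ξ*y/2)^2 := by
      rw [sq_le_sq]; exact Real.abs_sin_le_abs
    calc 4 * Real.sin (ξ*y/2)^2 * Real.exp (-(lam*y)) ≤ 4 * Real.sin (ξ*y/2)^2 * 1 :=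
          mul_le_mul_of_nonneg_left (he y hy0) (by positivity)
      _ ≤ _ := by nlinarith
  · have hi : IntegrableOn (fun y : ℝ => 4 * y ^ (-α - 1)) (Set.Ioi 1) :=
      (integrableOn_Ioi_rpow_of_lt (by linarith) one_pos).const_mul _
    refine Integrable.mono' hi hm.aestronglyMeasurable ?_
    refine (ae_restrict_iff' measurableSet_Ioi).mpr (Filter.Eventually.of_forall fun y hy => ?_)
    have hy0 : 0 < y := lt_trans one_pos hy
    have hp := Real.rpow_pos_of_pos hy0 (-α - 1)
    rw [Real.norm_of_nonneg (by positivity)]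
    apply mul_le_mul_of_nonneg_right _ hp.le
    have hsin := Real.sin_sq_le_one (ξ*y/2)
    calc 4 * Real.sin (ξ*y/2)^2 * Real.exp (-(lam*y)) ≤ 4 * Real.sin (ξ*y/2)^2 * 1 :=
          mul_le_mul_of_nonneg_left (he y hy0) (by positivity)
      _ ≤ _ := by nlinarith

lemma aux_pos (α lam ξ : ℝ) (hα : α ∈ Set.Ioo (1:ℝ) 2) (hlam : 0 ≤ lam) (hξ : ξ ≠ 0) :
    0 < ∫ y in Set.Ioi (0:ℝ), 4 * Real.sin (ξ*y/2)^2 * Real.exp (-(lam*y)) * y ^ (-α - 1) := by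
  rw [setIntegral_pos_iff_support_of_nonneg_ae _ (aux_integrable α lam ξ hα hlam)]
  · have hξ' : 0 < |ξ| := abs_pos.mpr hξ
    have hsub : Set.Ioo (0:ℝ) (2 * Real.pi / |ξ|) ⊆ (Function.support fun y : ℝ =>
        4 * Real.sin (ξ*y/2)^2 * Real.exp (-(lam*y)) * y ^ (-α - 1)) ∩ Set.Ioi 0 := by
      intro y hy
      have hy0 : 0 < y := hy.1
      refine ⟨?_, hy0⟩
      have h2 : y * |ξ| < 2 * Real.pi := (lt_div_iff₀ hξ').mp hy.2
      have hs : 0 < Real.sin (|ξ| * y / 2) :=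
        Real.sin_pos_of_pos_of_lt_pi (by positivity) (by linarith)
      have hq : Real.sin (ξ*y/2)^2 = Real.sin (|ξ| * y / 2)^2 := by
        rcases abs_choice ξ with h | h <;> rw [h]
        rw [show -ξ * y / 2 = -(ξ*y/2) by ring, Real.sin_neg, neg_sq]
      have hp := Real.rpow_pos_of_pos hy0 (-α - 1)
      rw [Function.mem_support, hq]
      positivity
    refine lt_of_lt_of_le ?_ (measure_mono hsub)
    rw [Real.volume_Ioo, ENNReal.ofReal_pos]
    have := Real.pi_pos
    rw [sub_zero]; positivity
  · refine (ae_restrict_iff' measurableSet_Ioi).mpr (Filter.Eventually.of_forall fun y hy => ?_)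
    have hp := Real.rpow_pos_of_pos hy (-α - 1)
    simp only [Pi.zero_apply]
    positivity

lemma aux_gamma_int (α : ℝ) (hα : α ∈ Set.Ioo (1:ℝ) 2) (z : ℂ) (hz : 0 < z.re) :
    IntegrableOn (fun t : ℝ => (t:ℂ) ^ ((2 - α : ℂ) - 1) * Complex.exp (-(z * t)))
      (Set.Ioi 0) := by
  obtain ⟨h1, h2⟩ := hα
  have hi := integrableOn_rpow_mul_exp_neg_mul_rpow (p := 1) (s := 1 - α) (b := z.re)
    (by linarith) one_pos hz
  refine Integrable.mono' hi ?_ ?_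
  · apply Measurable.aestronglyMeasurable
    fun_prop
  · refine (ae_restrict_iff' measurableSet_Ioi).mpr (Filter.Eventually.of_forall fun y hy => ?_)
    rw [norm_mul, norm_cpow_eq_rpow_re_of_pos hy, Complex.norm_exp]
    apply le_of_eq
    simp
    congr 1; ring

lemma aux_gamma_diff (α : ℝ) (hα : α ∈ Set.Ioo (1:ℝ) 2) (z : ℂ) (hz : 0 < z.re) :
    DifferentiableAt ℂ (fun w : ℂ => ∫ t in Set.Ioi (0:ℝ),
      (t:ℂ) ^ ((2 - α : ℂ) - 1) * Complex.exp (-(w * t))) z := by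
  have hs : {w : ℂ | z.re / 2 < w.re} ∈ nhds z :=
    (isOpen_lt continuous_const Complex.continuous_re).mem_nhds
      (by simp only [Set.mem_setOf_eq]; linarith)
  have hi := integrableOn_rpow_mul_exp_neg_mul_rpow (p := 1) (s := 2 - α) (b := z.re / 2)
    (by linarith [hα.2]) one_pos (by linarith)
  refine (hasDerivAt_integral_of_dominated_loc_of_deriv_le (μ := volume.restrict (Set.Ioi (0:ℝ)))
    (F := fun (w : ℂ) (t : ℝ) => (t:ℂ) ^ ((2 - α : ℂ) - 1) * Complex.exp (-(w * t)))
    (F' := fun (w : ℂ) (t : ℝ) =>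
      (t:ℂ) ^ ((2 - α : ℂ) - 1) * (Complex.exp (-(w * t)) * (-(t:ℂ)))) hs ?_
    (aux_gamma_int α hα z hz) ?_ ?_ hi ?_).2.differentiableAt
  · refine Filter.Eventually.of_forall fun w => Measurable.aestronglyMeasurable ?_
    fun_prop
  · apply Measurable.aestronglyMeasurable
    fun_prop
  · refine (ae_restrict_iff' measurableSet_Ioi).mpr (Filter.Eventually.of_forall fun y hy w hw => ?_)
    have hy0 : 0 < y := hy
    have hw' : z.re / 2 < w.re := hw
    rw [norm_mul, norm_mul, norm_cpow_eq_rpow_re_of_pos hy, Complex.norm_exp, norm_neg,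
      Complex.norm_real, Real.norm_of_nonneg hy0.le]
    have e1 : ((2 - α : ℂ) - 1).re = 1 - α := by simp; ring
    have e2 : y ^ (2 - α) = y ^ (1 - α) * y := by
      rw [← Real.rpow_add_one hy0.ne']; congr 1; ring
    have e3 : (-(w * (y:ℂ))).re = -(w.re * y) := by simp
    rw [e1, e2, e3, Real.rpow_one, mul_assoc, mul_comm (Real.exp _) y]
    have hp := Real.rpow_pos_of_pos hy0 (1 - α)
    refine mul_le_mul_of_nonneg_left (mul_le_mul_of_nonneg_left ?_ hy0.le) hp.le
    rw [Real.exp_le_exp]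
    nlinarith
  · refine Filter.Eventually.of_forall fun y w _ => ?_
    have : HasDerivAt (fun w : ℂ => -(w * (y:ℂ))) (-(y:ℂ)) w := by
      have h := ((hasDerivAt_id w).mul_const (y:ℂ)).neg
      rw [one_mul] at h
      exact h
    exact this.cexp.const_mul _

open Filter Topology in
lemma aux_gamma_formula (α : ℝ) (hα : α ∈ Set.Ioo (1:ℝ) 2) (z : ℂ) (hz : 0 < z.re) :
    ∫ t in Set.Ioi (0:ℝ), (t:ℂ) ^ ((2 - α : ℂ) - 1) * Complex.exp (-(z * t))
      = (1 / z) ^ (2 - α : ℂ) * Complex.Gamma (2 - α) := by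
  have hU : IsOpen {w : ℂ | 0 < w.re} := isOpen_lt continuous_const Complex.continuous_re
  have h1 : AnalyticOnNhd ℂ (fun w : ℂ => ∫ t in Set.Ioi (0:ℝ),
      (t:ℂ) ^ ((2 - α : ℂ) - 1) * Complex.exp (-(w * t))) {w : ℂ | 0 < w.re} :=
    DifferentiableOn.analyticOnNhd
      (fun w hw => (aux_gamma_diff α hα w hw).differentiableWithinAt) hU
  have h2 : AnalyticOnNhd ℂ (fun w : ℂ => (1 / w) ^ (2 - α : ℂ) * Complex.Gamma (2 - α))
      {w : ℂ | 0 < w.re} := by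
    refine DifferentiableOn.analyticOnNhd (fun w hw => ?_) hU
    have hw' : 0 < w.re := hw
    have hw0 : w ≠ 0 := by rintro rfl; simp at hw'
    have hsl : 1 / w ∈ Complex.slitPlane := by
      left
      rw [one_div, Complex.inv_re]
      exact div_pos hw' (Complex.normSq_pos.mpr hw0)
    have hd : DifferentiableAt ℂ (fun w : ℂ => 1 / w) w :=
      (differentiableAt_const _).div differentiableAt_id hw0
    exact ((hd.cpow_const hsl).mul_const _).differentiableWithinAt
  refine h1.eqOn_of_preconnected_of_frequently_eq h2
    (convex_halfSpace_re_gt 0).isPreconnected (z₀ := ((1:ℝ):ℂ)) (by simp) ?_ hz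
  have ht : Tendsto (fun r : ℝ => (r:ℂ)) (𝓝[≠] 1) (𝓝[≠] ((1:ℝ):ℂ)) := by
    refine tendsto_nhdsWithin_iff.mpr ⟨?_, ?_⟩
    · exact (Complex.continuous_ofReal.tendsto 1).mono_left nhdsWithin_le_nhds
    · refine eventually_nhdsWithin_of_forall fun r hr => ?_
      simpa using hr
  refine ht.frequently (Eventually.frequently ?_)
  have hp : ∀ᶠ r : ℝ in 𝓝[≠] 1, 0 < r := nhdsWithin_le_nhds (lt_mem_nhds one_pos)
  filter_upwards [hp] with r hr
  exact Complex.integral_cpow_mul_exp_neg_mul_Ioi (by simpa using hα.2) hr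

lemma aux_gamma_val (α : ℝ) (hα : α ∈ Set.Ioo (1:ℝ) 2) (z : ℂ) (hz : 0 < z.re) :
    ∫ t in Set.Ioi (0:ℝ), z^2 * ((t:ℂ) ^ ((2 - α : ℂ) - 1) * Complex.exp (-(z * t)))
      = Real.Gamma (2 - α) * z ^ (α:ℂ) := by
  obtain ⟨h1, h2⟩ := hα
  rw [integral_const_mul, aux_gamma_formula α ⟨h1, h2⟩ z hz]
  have hz0 : z ≠ 0 := by rintro rfl; simp at hz
  have harg : z.arg ≠ Real.pi := by
    intro h
    have := (Complex.arg_eq_pi_iff.mp h).1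
    linarith
  rw [one_div, Complex.inv_cpow _ _ harg, Complex.cpow_sub _ _ hz0, inv_div, Complex.cpow_ofNat,
    ← Complex.Gamma_ofReal]
  push_cast
  field_simp

/-- second derivative -/
noncomputable def auxF2 (lam ξ y : ℝ) : ℝ :=
  Real.exp (-(lam*y)) * ((2*lam^2 - 2*ξ^2) * Real.cos (ξ*y) + 4*lam*ξ*Real.sin (ξ*y) - 2*lam^2)

noncomputable def auxF1 (lam ξ y : ℝ) : ℝ :=
  Real.exp (-(lam*y)) * (-2*ξ*Real.sin (ξ*y) + lam * (4 * Real.sin (ξ*y/2)^2))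

lemma aux_cos (x : ℝ) : 4 * Real.sin (x/2)^2 = 2 - 2 * Real.cos x := by
  have := Real.cos_two_mul (x/2)
  rw [mul_div_cancel₀ x two_ne_zero] at this
  nlinarith [Real.sin_sq_add_cos_sq (x/2)]

lemma auxF2_eq (α lam ξ y : ℝ) (hy : 0 < y) :
    ((auxF2 lam ξ y * y ^ (1 - α) : ℝ) : ℂ) =
      ((lam:ℂ) + I * ξ)^2 * ((y:ℂ) ^ ((2 - α : ℂ) - 1) * Complex.exp (-(((lam:ℂ) + I * ξ) * y)))
      + ((lam:ℂ) - I * ξ)^2 * ((y:ℂ) ^ ((2 - α : ℂ) - 1) * Complex.exp (-(((lam:ℂ) - I * ξ) * y)))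
      - 2 * ((lam:ℂ)^2 * ((y:ℂ) ^ ((2 - α : ℂ) - 1) * Complex.exp (-((lam:ℂ) * y)))) := by
  have e1 : Complex.exp (-(((lam:ℂ) + I * ξ) * y)) =
      Complex.exp (-((lam:ℂ) * y)) * (Complex.cos (ξ*y) - Complex.sin (ξ*y) * I) := by
    have : Complex.cos (ξ*y) - Complex.sin (ξ*y) * I = Complex.exp (-(ξ*y) * I) := by
      rw [Complex.exp_mul_I, Complex.cos_neg, Complex.sin_neg]; ring
    rw [this, ← Complex.exp_add]; congr 1; ring
  have e2 : Complex.exp (-(((lam:ℂ) - I * ξ) * y)) =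
      Complex.exp (-((lam:ℂ) * y)) * (Complex.cos (ξ*y) + Complex.sin (ξ*y) * I) := by
    rw [← Complex.exp_mul_I, ← Complex.exp_add]; congr 1; ring
  have e3 : ((y ^ (1 - α) : ℝ) : ℂ) = (y:ℂ) ^ ((2 - α : ℂ) - 1) := by
    rw [Complex.ofReal_cpow hy.le]; congr 1; push_cast; ring
  rw [e1, e2, ofReal_mul, e3, auxF2]
  push_cast
  linear_combination ((4*lam*ξ*Complex.sin (ξ*y) - 2*ξ^2*Complex.cos (ξ*y)) * Complex.exp (-((lam:ℂ) * y)) * (y:ℂ) ^ ((2 - α : ℂ) - 1) ) * I_sq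

lemma aux_int2 (α lam ξ : ℝ) (hα : α ∈ Set.Ioo (1:ℝ) 2) (hlam : 0 < lam) :
    IntegrableOn (fun y : ℝ => auxF2 lam ξ y * y ^ (1 - α)) (Set.Ioi 0) ∧
    ((∫ y in Set.Ioi (0:ℝ), auxF2 lam ξ y * y ^ (1 - α) : ℝ) : ℂ) =
      Real.Gamma (2 - α) * (((lam : ℂ) + I * (ξ : ℂ)) ^ (α : ℂ)
        + ((lam : ℂ) - I * (ξ : ℂ)) ^ (α : ℂ) - 2 * (lam : ℂ) ^ (α : ℂ)) := by
  have z1 : 0 < ((lam : ℂ) + I * (ξ : ℂ)).re := by simpa using hlam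
  have z2 : 0 < ((lam : ℂ) - I * (ξ : ℂ)).re := by simpa using hlam
  have z3 : 0 < (lam : ℂ).re := by simpa using hlam
  have i1 := (aux_gamma_int α hα _ z1).const_mul (((lam : ℂ) + I * (ξ : ℂ))^2)
  have i2 := (aux_gamma_int α hα _ z2).const_mul (((lam : ℂ) - I * (ξ : ℂ))^2)
  have i3 := ((aux_gamma_int α hα _ z3).const_mul ((lam : ℂ)^2)).const_mul 2
  constructor
  · have hi : IntegrableOn (fun y : ℝ => ((auxF2 lam ξ y * y ^ (1 - α) : ℝ) : ℂ)) (Set.Ioi 0) := by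
      refine IntegrableOn.congr_fun ((i1.add i2).sub i3) (fun y hy => ?_) measurableSet_Ioi
      exact (auxF2_eq α lam ξ y hy).symm
    exact hi.re
  · rw [← integral_complex_ofReal]
    have : ∫ y in Set.Ioi (0:ℝ), ((auxF2 lam ξ y * y ^ (1 - α) : ℝ) : ℂ) = _ :=
      setIntegral_congr_fun measurableSet_Ioi (fun y hy => auxF2_eq α lam ξ y hy)
    refine this.trans ?_
    have i12 := i1.add i2
    simp only [Pi.add_def] at i12
    rw [integral_sub i12 i3, integral_add i1 i2, integral_const_mul (2:ℂ),
      aux_gamma_val α hα _ z1, aux_gamma_val α hα _ z2, aux_gamma_val α hα _ z3]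
    ring

/-- primitive -/
noncomputable def auxG (α lam ξ y : ℝ) : ℝ :=
  -(Real.exp (-(lam*y)) * (4 * Real.sin (ξ*y/2)^2)) * y ^ (-α) / α
    + auxF1 lam ξ y * y ^ (1 - α) / (α * (α - 1))

lemma auxG_deriv (α lam ξ y : ℝ) (hα : α ∈ Set.Ioo (1:ℝ) 2) (hy : 0 < y) :
    HasDerivAt (auxG α lam ξ) (auxF2 lam ξ y * y ^ (1 - α) / (α * (α - 1))
      + 4 * Real.sin (ξ*y/2)^2 * Real.exp (-(lam*y)) * y ^ (-α - 1)) y := by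
  obtain ⟨h1, h2⟩ := hα
  have hG : auxG α lam ξ = fun y => 
     (-(Real.exp (-(lam*y)) * (2 - 2 * Real.cos (ξ*y))) * y ^ (-α) / α
    + (Real.exp (-(lam*y)) * (-2*ξ*Real.sin (ξ*y) + lam * (2 - 2 * Real.cos (ξ*y)))) * y ^ (1 - α) / (α * (α - 1))) := by
    funext y
    rw [auxG, auxF1, aux_cos]
  rw [hG, aux_cos]
  have dl : HasDerivAt (fun y : ℝ => ξ * y) ξ y := by simpa using (hasDerivAt_id y).const_mul ξ
  have de : HasDerivAt (fun y : ℝ => Real.exp (-(lam*y))) (Real.exp (-(lam*y)) * (-lam)) y := by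
    have : HasDerivAt (fun y : ℝ => -(lam * y)) (-lam) y := by
      have h := ((hasDerivAt_id y).const_mul lam).neg
      rw [mul_one] at h
      exact h
    exact this.exp
  have dc := dl.cos
  have ds := dl.sin
  have p1 := Real.hasDerivAt_rpow_const (x := y) (p := -α) (Or.inl hy.ne')
  have p2 := Real.hasDerivAt_rpow_const (x := y) (p := 1 - α) (Or.inl hy.ne')
  have dF := (de.mul ((dc.const_mul 2).const_sub 2)).neg
  have dF1 := de.mul ((ds.const_mul (-2*ξ)).add (((dc.const_mul 2).const_sub 2).const_mul lam))
  have hd := ((dF.mul p1).div_const α).add ((dF1.mul p2).div_const (α * (α - 1)))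
  refine hd.congr_deriv ?_
  have r1 : y ^ (-α) = y * y ^ (-α - 1) := by
    rw [← Real.rpow_one_add' hy.le (by linarith)]; congr 1; ring
  have r2 : y ^ (1 - α) = y * y * y ^ (-α - 1) := by
    rw [mul_assoc, ← r1, ← Real.rpow_one_add' hy.le (by linarith)]; congr 1
  have r3 : y ^ (1 - α - 1) = y * y ^ (-α - 1) := by
    rw [← r1]; congr 1; ring
  rw [r3, r2, r1, auxF2]
  have ha : α ≠ 0 := by linarith
  have hb : α - 1 ≠ 0 := by linarith
  simp only [Pi.mul_apply, Pi.neg_apply, Pi.add_apply]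
  field_simp
  ring

lemma auxG_bound (α lam ξ y : ℝ) (hα : α ∈ Set.Ioo (1:ℝ) 2) (hlam : 0 < lam) (hy : 0 < y) :
    |auxG α lam ξ y| ≤ (ξ^2/α + 2*ξ^2/(α*(α-1))) * (y ^ (2-α) * Real.exp (-lam * y))
      + lam * ξ^2/(α*(α-1)) * (y ^ (3-α) * Real.exp (-lam * y)) := by
  obtain ⟨h1, h2⟩ := hα
  have hb : 0 < α - 1 := by linarith
  have hp := Real.rpow_pos_of_pos hy (-α)
  have r1 : y ^ (1-α) = y * y ^ (-α) := by
    rw [← Real.rpow_one_add' hy.le (by linarith)]; congr 1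
  have r2 : y ^ (2-α) = y * y * y ^ (-α) := by
    rw [mul_assoc, ← r1, ← Real.rpow_one_add' hy.le (by linarith)]; congr 1; ring
  have r3 : y ^ (3-α) = y * y * y * y ^ (-α) := by
    rw [show y * y * y * y ^ (-α) = y * (y * y * y ^ (-α)) by ring, ← r2, ← Real.rpow_one_add' hy.le (by linarith)]
    congr 1; ring
  have hE := Real.exp_pos (-(lam*y))
  have hs2 : 4 * Real.sin (ξ*y/2)^2 ≤ ξ^2*y^2 := by
    have : Real.sin (ξ*y/2)^2 ≤ (ξ*y/2)^2 := by
      rw [sq_le_sq]; exact Real.abs_sin_le_abs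
    nlinarith
  have hs1 : |ξ * Real.sin (ξ*y)| ≤ ξ^2 * y := by
    rw [abs_mul]
    calc |ξ| * |Real.sin (ξ*y)| ≤ |ξ| * |ξ*y| :=
          mul_le_mul_of_nonneg_left Real.abs_sin_le_abs (abs_nonneg _)
      _ = ξ^2 * y := by rw [abs_mul, abs_of_pos hy, ← mul_assoc, abs_mul_abs_self]; ring
  have hS : 0 ≤ 4 * Real.sin (ξ*y/2)^2 := by positivity
  have hF1 : |-2*ξ*Real.sin (ξ*y) + lam * (4 * Real.sin (ξ*y/2)^2)| ≤ 2*(ξ^2*y) + lam*(ξ^2*y^2) := by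
    have h3 := abs_le.mp hs1
    have h4 := mul_le_mul_of_nonneg_left hs2 hlam.le
    have h5 := mul_nonneg hlam.le hS
    rw [abs_le]; constructor <;> nlinarith
  rw [auxG, auxF1, r3, r2, r1, show -lam * y = -(lam*y) by ring]
  refine (abs_add_le _ _).trans ?_
  have A : |-(Real.exp (-(lam*y)) * (4 * Real.sin (ξ*y/2)^2)) * y ^ (-α) / α| =
     (4 * Real.sin (ξ*y/2)^2) * (Real.exp (-(lam*y)) * y ^ (-α) / α) := by
    rw [neg_mul, neg_div, abs_neg, abs_of_nonneg (by positivity)]; ring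
  have B : |Real.exp (-(lam*y)) * (-2*ξ*Real.sin (ξ*y) + lam * (4 * Real.sin (ξ*y/2)^2)) * (y * y ^ (-α)) / (α * (α - 1))|
     = |-2*ξ*Real.sin (ξ*y) + lam * (4 * Real.sin (ξ*y/2)^2)| * (Real.exp (-(lam*y)) * (y * y ^ (-α)) / (α * (α - 1))) := by
    have hK : 0 ≤ Real.exp (-(lam*y)) * (y * y ^ (-α)) / (α * (α - 1)) := by positivity
    conv_rhs => rw [← abs_of_nonneg hK, ← abs_mul]
    congr 1; ring
  rw [A, B]
  refine (add_le_add (mul_le_mul_of_nonneg_right hs2 (by positivity))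
    (mul_le_mul_of_nonneg_right hF1 (by positivity))).trans (le_of_eq ?_)
  field_simp
  ring

open Filter Topology in
lemma aux_main_pos (α lam ξ : ℝ) (hα : α ∈ Set.Ioo (1:ℝ) 2) (hlam : 0 < lam) :
    (∫ y in Set.Ioi (0:ℝ), auxF2 lam ξ y * y ^ (1 - α)) / (α * (α - 1)) = 
      - ∫ y in Set.Ioi (0:ℝ), 4 * Real.sin (ξ*y/2)^2 * Real.exp (-(lam*y)) * y ^ (-α - 1) := by
  have i1 := (aux_int2 α lam ξ hα hlam).1.div_const (α * (α - 1))
  have i2 := aux_integrable α lam ξ hα hlam.le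
  have hb := fun y hy => auxG_bound α lam ξ y hα hlam hy
  have hd := fun y hy => auxG_deriv α lam ξ y hα hy
  have h2 := hα.2
  have hG0 : auxG α lam ξ 0 = 0 := by simp [auxG, auxF1]
  have key := integral_Ioi_of_hasDerivAt_of_tendsto (a := 0) (f := auxG α lam ξ) (m := 0)
    ?_ hd (i1.add i2) ?_
  · rw [integral_add i1 i2, integral_div, hG0] at key
    linarith
  · rw [← continuousWithinAt_Ioi_iff_Ici, ContinuousWithinAt, hG0]
    refine squeeze_zero_norm' (eventually_nhdsWithin_of_forall fun y hy => hb y hy) ?_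
    have c : ∀ s : ℝ, 0 < s → Tendsto (fun y : ℝ => y ^ s * Real.exp (-lam * y)) (𝓝[>] 0) (𝓝 0) := by
      intro s hs
      have : ContinuousAt (fun y : ℝ => y ^ s * Real.exp (-lam * y)) 0 :=
        (Real.continuousAt_rpow_const _ _ (Or.inr hs.le)).mul (by fun_prop)
      have := this.tendsto
      simp only [Real.zero_rpow hs.ne', zero_mul] at this
      exact this.mono_left nhdsWithin_le_nhds
    simpa using ((c (2-α) (by linarith)).const_mul _).add ((c (3-α) (by linarith)).const_mul _)
  · refine squeeze_zero_norm' ((eventually_gt_atTop 0).mono fun y hy => hb y hy) ?_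
    have c := fun s => tendsto_rpow_mul_exp_neg_mul_atTop_nhds_zero s lam hlam
    simpa using ((c (2-α)).const_mul _).add ((c (3-α)).const_mul _)

lemma aux_formula_pos (α lam ξ : ℝ) (hα : α ∈ Set.Ioo (1:ℝ) 2) (hlam : 0 < lam) :
    ((lam : ℂ) + Complex.I * (ξ : ℂ)) ^ (α : ℂ)
        + ((lam : ℂ) - Complex.I * (ξ : ℂ)) ^ (α : ℂ) - 2 * (lam : ℂ) ^ (α : ℂ) =
      ((-((α * (α - 1) / Real.Gamma (2 - α)) *
        ∫ y in Set.Ioi (0:ℝ), 4 * Real.sin (ξ*y/2)^2 * Real.exp (-(lam*y)) * y ^ (-α - 1)) : ℝ) : ℂ) := by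
  have h1 := aux_main_pos α lam ξ hα hlam
  have h2 := (aux_int2 α lam ξ hα hlam).2
  have hg : 0 < Real.Gamma (2 - α) := Real.Gamma_pos_of_pos (by linarith [hα.2])
  have ha : α ≠ 0 := by linarith [hα.1]
  have hb : α - 1 ≠ 0 := by linarith [hα.1]
  have h3 : (-((α * (α - 1) / Real.Gamma (2 - α)) *
        ∫ y in Set.Ioi (0:ℝ), 4 * Real.sin (ξ*y/2)^2 * Real.exp (-(lam*y)) * y ^ (-α - 1)) : ℝ)
      = (∫ y in Set.Ioi (0:ℝ), auxF2 lam ξ y * y ^ (1 - α)) / Real.Gamma (2 - α) := by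
    rw [← mul_neg, ← h1]; field_simp
  rw [h3, ofReal_div, h2, mul_div_cancel_left₀]
  exact_mod_cast hg.ne'

open Filter Topology in
lemma aux_formula (α lam ξ : ℝ) (hα : α ∈ Set.Ioo (1:ℝ) 2) (hlam : 0 ≤ lam) :
    ((lam : ℂ) + Complex.I * (ξ : ℂ)) ^ (α : ℂ)
        + ((lam : ℂ) - Complex.I * (ξ : ℂ)) ^ (α : ℂ) - 2 * (lam : ℂ) ^ (α : ℂ) =
      ((-((α * (α - 1) / Real.Gamma (2 - α)) *
        ∫ y in Set.Ioi (0:ℝ), 4 * Real.sin (ξ*y/2)^2 * Real.exp (-(lam*y)) * y ^ (-α - 1)) : ℝ) : ℂ) := by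
  rcases hlam.lt_or_eq with h | rfl
  · exact aux_formula_pos α lam ξ hα h
  have hα0 : 0 < (α:ℂ).re := by simpa using (by linarith [hα.1] : 0 < α)
  have hL : Tendsto (fun l : ℝ => ((l : ℂ) + Complex.I * (ξ : ℂ)) ^ (α : ℂ)
        + ((l : ℂ) - Complex.I * (ξ : ℂ)) ^ (α : ℂ) - 2 * (l : ℂ) ^ (α : ℂ)) (𝓝[>] 0)
      (𝓝 ((((0:ℝ) : ℂ) + Complex.I * (ξ : ℂ)) ^ (α : ℂ)
        + (((0:ℝ) : ℂ) - Complex.I * (ξ : ℂ)) ^ (α : ℂ) - 2 * ((0:ℝ) : ℂ) ^ (α : ℂ))) := by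
    have c : ∀ w : ℂ, w.re = 0 → ContinuousAt (fun l : ℝ => ((l:ℂ) + w) ^ (α:ℂ)) 0 := by
      intro w hw
      have h1 : ContinuousAt (fun x : ℂ => x ^ (α:ℂ)) (((0:ℝ):ℂ) + w) :=
        continuousAt_cpow_const_of_re_pos (Or.inl (by simp [hw])) hα0
      exact ContinuousAt.comp (f := fun l : ℝ => (l:ℂ) + w) h1 (by fun_prop)
    have c1 := c (I * ξ) (by simp)
    have c2 := c (-(I * ξ)) (by simp)
    have c3 := c 0 (by simp)
    simp only [← sub_eq_add_neg] at c2
    simp only [add_zero] at c3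
    exact ((c1.add c2).sub (continuousAt_const.mul c3)).tendsto.mono_left nhdsWithin_le_nhds
  have hI : Tendsto (fun l : ℝ => ∫ y in Set.Ioi (0:ℝ),
        4 * Real.sin (ξ*y/2)^2 * Real.exp (-(l*y)) * y ^ (-α - 1)) (𝓝[>] 0)
      (𝓝 (∫ y in Set.Ioi (0:ℝ),
        4 * Real.sin (ξ*y/2)^2 * Real.exp (-(0*y)) * y ^ (-α - 1))) := by
    refine tendsto_integral_filter_of_dominated_convergence _ ?_ ?_
      (aux_integrable α 0 ξ hα le_rfl) ?_
    · refine Eventually.of_forall fun l => Measurable.aestronglyMeasurable ?_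
      fun_prop
    · refine eventually_nhdsWithin_of_forall fun l hl => ?_
      refine (ae_restrict_iff' measurableSet_Ioi).mpr (Filter.Eventually.of_forall fun y hy => ?_)
      have hp := Real.rpow_pos_of_pos hy (-α - 1)
      rw [Real.norm_of_nonneg (by positivity)]
      apply mul_le_mul_of_nonneg_right _ hp.le
      apply mul_le_mul_of_nonneg_left _ (by positivity)
      rw [Real.exp_le_exp]
      have : 0 < l * y := mul_pos hl hy
      linarith
    · refine Filter.Eventually.of_forall fun y => ?_
      have : Continuous (fun l : ℝ => 4 * Real.sin (ξ*y/2)^2 * Real.exp (-(l*y)) * y ^ (-α - 1)) := by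
        fun_prop
      exact this.continuousAt.tendsto.mono_left nhdsWithin_le_nhds
  have hR := (Complex.continuous_ofReal.tendsto _).comp
    ((hI.const_mul (α * (α - 1) / Real.Gamma (2 - α))).neg)
  refine tendsto_nhds_unique hL (hR.congr' ?_)
  exact eventually_nhdsWithin_of_forall fun l hl => (aux_formula_pos α l ξ hα hl).symm


/-- For `α ∈ (1,2)`, `λ ≥ 0` and `ξ ∈ ℝ`, with `z^α` the principal branch of the
complex power,
`(λ + iξ)^α + (λ − iξ)^α − 2λ^α = −(α(α−1)/Γ(2−α))·∫₀^∞ 4 sin²(ξy/2) e^{−λy} y^{−α−1} dy`;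
in particular `−((λ + iξ)^α + (λ − iξ)^α − 2λ^α)` is a nonnegative real number,
strictly positive for `ξ ≠ 0`. -/
theorem tempered_symbol_negativity_alpha_gt_one (α lam ξ : ℝ)
    (hα : α ∈ Set.Ioo (1:ℝ) 2) (hlam : 0 ≤ lam) :
    ((lam : ℂ) + Complex.I * (ξ : ℂ)) ^ (α : ℂ)
        + ((lam : ℂ) - Complex.I * (ξ : ℂ)) ^ (α : ℂ) - 2 * (lam : ℂ) ^ (α : ℂ) =
      ((-((α * (α - 1) / Real.Gamma (2 - α)) *
        ∫ y in Set.Ioi (0:ℝ), 4 * Real.sin (ξ*y/2)^2 * Real.exp (-(lam*y)) * y ^ (-α - 1)) : ℝ) : ℂ) ∧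
    0 ≤ (α * (α - 1) / Real.Gamma (2 - α)) *
        ∫ y in Set.Ioi (0:ℝ), 4 * Real.sin (ξ*y/2)^2 * Real.exp (-(lam*y)) * y ^ (-α - 1) ∧
    (ξ ≠ 0 → 0 < (α * (α - 1) / Real.Gamma (2 - α)) *
        ∫ y in Set.Ioi (0:ℝ), 4 * Real.sin (ξ*y/2)^2 * Real.exp (-(lam*y)) * y ^ (-α - 1)) := by
  have hg : 0 < Real.Gamma (2 - α) := Real.Gamma_pos_of_pos (by linarith [hα.2])
  have hc : 0 < α * (α - 1) / Real.Gamma (2 - α) :=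
    div_pos (mul_pos (by linarith [hα.1]) (by linarith [hα.1])) hg
  refine ⟨aux_formula α lam ξ hα hlam, ?_, fun hξ => mul_pos hc (aux_pos α lam ξ hα hlam hξ)⟩
  refine mul_nonneg hc.le (setIntegral_nonneg measurableSet_Ioi fun y hy => ?_)
  have hp := Real.rpow_pos_of_pos hy (-α - 1)
  positivity
end
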